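/- Let (x̄,ȳ) be a nondegenerate T-stationary point of the regularized continuous reformulation R with T-index m, additionally satisfying NDT6 (σ̄_{1,i} ≠ 0 for all i ∈ a01(x̄,ȳ)). Then for every neighborhood U of (x̄,ȳ) there exists t̄ > 0 such that for every t ∈ (0, t̄) the Scholtes-type regularization S(t) possesses a nondegenerate Karush–Kuhn–Tucker point (x^t,y^t) ∈ U whose quadratic index equals m. -/

import Mathlib

open scoped Classical
open Finset Filter Topology

noncomputable section
namespace Scholtes

/-- Vectors in ℝⁿ. -/
abbrev Vec (n : ℕ) := Fin n → ℝ

variable {n : ℕ} {P Q : Type*} [Fintype P] [Fintype Q]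

/-- Euclidean dot product. -/
def dot (u v : Vec n) : ℝ := ∑ i, u i * v i

/-- Gradient: vector of partial derivatives. -/
def grad (f : Vec n → ℝ) (x : Vec n) : Vec n := fun i => fderiv ℝ f x (Pi.single i 1)

/-- Hessian bilinear form of `L` at `z`, evaluated at directions `ξ`, `ζ`. -/
def hess (L : Vec n × Vec n → ℝ) (z ξ ζ : Vec n × Vec n) : ℝ :=
  fderiv ℝ (fun w => fderiv ℝ L w ξ) z ζ

/-- The pair vector (e_i, 0) ∈ ℝ²ⁿ. -/
def ex (i : Fin n) : Vec n × Vec n := (Pi.single i 1, 0)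

/-- The pair vector (0, e_i) ∈ ℝ²ⁿ. -/
def ey (i : Fin n) : Vec n × Vec n := (0, Pi.single i 1)

/-- The pair vector (0, e) ∈ ℝ²ⁿ, where e is the all-ones vector. -/
def eAll : Vec n × Vec n := (0, fun _ => 1)

/-- The pair vector (y_i e_i, x_i e_i) ∈ ℝ²ⁿ. -/
def hvec (x y : Vec n) (i : Fin n) : Vec n × Vec n := (Pi.single i (y i), Pi.single i (x i))

/-- The number of negative eigenvalues of the bilinear form `B` restricted to the
(sub)space `T`, expressed as the maximal dimension of a linear subspace of `T` on
which the associated quadratic form is negative definite. -/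
def negIndex (B : (Vec n × Vec n) → (Vec n × Vec n) → ℝ) (T : (Vec n × Vec n) → Prop) : ℕ :=
  sSup {d : ℕ | ∃ W : Submodule ℝ (Vec n × Vec n),
    (∀ ξ ∈ W, T ξ) ∧ Module.finrank ℝ W = d ∧ ∀ ξ ∈ W, ξ ≠ 0 → B ξ ξ < 0}

/-- The data and standing assumptions of the paper: objective `f`, equality
constraints `h`, inequality constraints `g`, positive pairwise different linear
coefficients `c`, cardinality bound `s` and regularization parameter `ε`. -/
structure Setting (n : ℕ) (P Q : Type*) [Fintype P] [Fintype Q] where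
  f : Vec n → ℝ
  h : P → Vec n → ℝ
  g : Q → Vec n → ℝ
  c : Vec n
  s : ℕ
  ε : ℝ
  hn : 1 ≤ n
  hf : ContDiff ℝ 2 f
  hh : ∀ p, ContDiff ℝ 2 (h p)
  hg : ∀ q, ContDiff ℝ 2 (g q)
  hcpos : ∀ i, 0 < c i
  hcinj : Function.Injective c
  hs : s < n
  hεpos : 0 < ε
  hεle : ε ≤ 1 / ((n : ℝ) - s)

/-- Index set a01: x̄_i = 0, ȳ_i > 0. -/
def a01 (x y : Vec n) : Finset (Fin n) := univ.filter fun i => x i = 0 ∧ 0 < y i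

/-- Index set a10: x̄_i ≠ 0, ȳ_i = 0. -/
def a10 (x y : Vec n) : Finset (Fin n) := univ.filter fun i => x i ≠ 0 ∧ y i = 0

/-- Index set a00: x̄_i = 0, ȳ_i = 0. -/
def a00 (x y : Vec n) : Finset (Fin n) := univ.filter fun i => x i = 0 ∧ y i = 0

/-- Index set N(y): y_i = 0. -/
def Nact (y : Vec n) : Finset (Fin n) := univ.filter fun i => y i = 0

/-- Index set H≥(x,y): x_i y_i = −t. -/
def Hge (t : ℝ) (x y : Vec n) : Finset (Fin n) := univ.filter fun i => x i * y i = -t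

/-- Index set H≤(x,y): x_i y_i = t. -/
def Hle (t : ℝ) (x y : Vec n) : Finset (Fin n) := univ.filter fun i => x i * y i = t

/-- Index set H(x,y) = H≥ ∪ H≤. -/
def Hact (t : ℝ) (x y : Vec n) : Finset (Fin n) := Hge t x y ∪ Hle t x y

/-- Active inequality constraints Q0(x). -/
def Q0 (D : Setting n P Q) (x : Vec n) : Finset Q := univ.filter fun q => D.g q x = 0

/-- Active upper bounds E(y): y_i = 1 + ε. -/
def Eact (D : Setting n P Q) (y : Vec n) : Finset (Fin n) := univ.filter fun i => y i = 1 + D.ε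

/-- Index set O(x,y) = complement of E(y) ∪ N(y) ∪ H(x,y). -/
def Oact (D : Setting n P Q) (t : ℝ) (x y : Vec n) : Finset (Fin n) :=
  (Eact D y ∪ Nact y ∪ Hact t x y)ᶜ

/-- Feasibility for the regularized continuous reformulation R. -/
def feasR (D : Setting n P Q) (x y : Vec n) : Prop :=
  (∀ p, D.h p x = 0) ∧ (∀ q, 0 ≤ D.g q x) ∧ ((n : ℝ) - D.s ≤ ∑ i, y i) ∧
  (∀ i, x i * y i = 0) ∧ (∀ i, 0 ≤ y i ∧ y i ≤ 1 + D.ε)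

/-- Feasibility for the Scholtes-type regularization S(t). -/
def feasS (D : Setting n P Q) (t : ℝ) (x y : Vec n) : Prop :=
  (∀ p, D.h p x = 0) ∧ (∀ q, 0 ≤ D.g q x) ∧ ((n : ℝ) - D.s ≤ ∑ i, y i) ∧
  (∀ i, -t ≤ x i * y i ∧ x i * y i ≤ t) ∧ (∀ i, 0 ≤ y i ∧ y i ≤ 1 + D.ε)

/-- Multipliers for T-stationarity (defined on the whole index ranges). -/
structure TMult (n : ℕ) (P Q : Type*) where
  lam : P → ℝ
  mu1 : Q → ℝ
  mu2 : Fin n → ℝ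
  mu3 : ℝ
  sig1 : Fin n → ℝ
  sig2 : Fin n → ℝ
  rho1 : Fin n → ℝ
  rho2 : Fin n → ℝ

/-- The T-stationarity equation (1) of Definition 2. -/
def TStatEq (D : Setting n P Q) (x y : Vec n) (M : TMult n P Q) : Prop :=
  ((grad D.f x, D.c) : Vec n × Vec n) =
    (∑ p, M.lam p • ((grad (D.h p) x, (0 : Vec n)) : Vec n × Vec n))
    + (∑ q ∈ Q0 D x, M.mu1 q • ((grad (D.g q) x, (0 : Vec n)) : Vec n × Vec n))
    - (∑ i ∈ Eact D y, M.mu2 i • ey i)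
    + M.mu3 • eAll
    + (∑ i ∈ a01 x y, M.sig1 i • ex i)
    + (∑ i ∈ a10 x y, M.sig2 i • ey i)
    + (∑ i ∈ a00 x y, (M.rho1 i • ex i + M.rho2 i • ey i))

/-- (x,y) is a T-stationary point of R with multipliers M. -/
def TStatAt (D : Setting n P Q) (x y : Vec n) (M : TMult n P Q) : Prop :=
  feasR D x y ∧
  (∀ q ∈ Q0 D x, 0 ≤ M.mu1 q) ∧
  (∀ i ∈ Eact D y, 0 ≤ M.mu2 i) ∧
  0 ≤ M.mu3 ∧
  M.mu3 * ((∑ i, y i) - ((n : ℝ) - D.s)) = 0 ∧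
  (∀ i ∈ a00 x y, M.rho1 i = 0 ∨ M.rho2 i ≤ 0) ∧
  TStatEq D x y M

/-- (x,y) is a T-stationary point of R. -/
def TStat (D : Setting n P Q) (x y : Vec n) : Prop := ∃ M, TStatAt D x y M

/-- MPOC-tailored LICQ at a feasible point (x,y) of R: the indicated family of
vectors in ℝ²ⁿ is linearly independent. -/
def MPOC_LICQ (D : Setting n P Q) (x y : Vec n) : Prop :=
  ∀ (lam : P → ℝ) (mu1 : Q → ℝ) (mu2 : Fin n → ℝ) (mu3 : ℝ) (s1 s2 : Fin n → ℝ),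
    ((∑ i, y i) ≠ (n : ℝ) - D.s → mu3 = 0) →
    (∑ p, lam p • ((grad (D.h p) x, (0 : Vec n)) : Vec n × Vec n))
    + (∑ q ∈ Q0 D x, mu1 q • ((grad (D.g q) x, (0 : Vec n)) : Vec n × Vec n))
    + (∑ i ∈ Eact D y, mu2 i • ey i)
    + mu3 • eAll
    + (∑ i ∈ a01 x y ∪ a00 x y, s1 i • ex i)
    + (∑ i ∈ a10 x y ∪ a00 x y, s2 i • ey i) = 0 →
    (∀ p, lam p = 0) ∧ (∀ q ∈ Q0 D x, mu1 q = 0) ∧ (∀ i ∈ Eact D y, mu2 i = 0) ∧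
    mu3 = 0 ∧ (∀ i ∈ a01 x y ∪ a00 x y, s1 i = 0) ∧ (∀ i ∈ a10 x y ∪ a00 x y, s2 i = 0)

/-- The Lagrange function L^R associated with the T-stationary point (x̄,ȳ)
and multipliers M. -/
def LagR (D : Setting n P Q) (xb yb : Vec n) (M : TMult n P Q) (z : Vec n × Vec n) : ℝ :=
  D.f z.1 + dot D.c z.2
    - (∑ p, M.lam p * D.h p z.1)
    - (∑ q ∈ Q0 D xb, M.mu1 q * D.g q z.1)
    + (∑ i ∈ Eact D yb, M.mu2 i * (z.2 i - (1 + D.ε)))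
    - M.mu3 * ((∑ i, z.2 i) - ((n : ℝ) - D.s))
    - (∑ i ∈ a01 xb yb, M.sig1 i * z.1 i)
    - (∑ i ∈ a10 xb yb, M.sig2 i * z.2 i)
    - (∑ i ∈ a00 xb yb, (M.rho1 i * z.1 i + M.rho2 i * z.2 i))

/-- Membership in the tangent space T^R at (x̄,ȳ). -/
def inTR (D : Setting n P Q) (x y : Vec n) (ξ : Vec n × Vec n) : Prop :=
  (∀ p, dot (grad (D.h p) x) ξ.1 = 0) ∧
  (∀ q ∈ Q0 D x, dot (grad (D.g q) x) ξ.1 = 0) ∧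
  (∀ i ∈ Eact D y, ξ.2 i = 0) ∧
  ((∑ i, y i) = (n : ℝ) - D.s → (∑ i, ξ.2 i) = 0) ∧
  (∀ i ∈ a00 x y ∪ a01 x y, ξ.1 i = 0) ∧
  (∀ i ∈ a00 x y ∪ a10 x y, ξ.2 i = 0)

/-- Nondegenerate T-stationary point with multipliers M (NDT1–NDT4). -/
def NondegTStatAt (D : Setting n P Q) (x y : Vec n) (M : TMult n P Q) : Prop :=
  TStatAt D x y M ∧
  MPOC_LICQ D x y ∧
  (∀ q ∈ Q0 D x, 0 < M.mu1 q) ∧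
  (∀ i ∈ Eact D y, 0 < M.mu2 i) ∧
  ((∑ i, y i) = (n : ℝ) - D.s → 0 < M.mu3) ∧
  (∀ i ∈ a00 x y, M.rho1 i ≠ 0 ∧ M.rho2 i < 0) ∧
  (∀ ξ, inTR D x y ξ → (∀ ζ, inTR D x y ζ → hess (LagR D x y M) (x, y) ξ ζ = 0) → ξ = 0)

/-- T-index: quadratic index (number of negative eigenvalues of the restricted
Hessian of L^R) plus the biactive index |a00|. -/
def TIndex (D : Setting n P Q) (x y : Vec n) (M : TMult n P Q) : ℕ :=
  negIndex (hess (LagR D x y M) (x, y)) (inTR D x y) + (a00 x y).card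

/-- Multipliers for KKT points of S(t) (defined on the whole index ranges). -/
structure SMult (n : ℕ) (P Q : Type*) where
  lam : P → ℝ
  mu1 : Q → ℝ
  mu2 : Fin n → ℝ
  mu3 : ℝ
  etaGe : Fin n → ℝ
  etaLe : Fin n → ℝ
  nu : Fin n → ℝ

/-- The KKT equation for S(t). -/
def KKTEq (D : Setting n P Q) (t : ℝ) (x y : Vec n) (M : SMult n P Q) : Prop :=
  ((grad D.f x, D.c) : Vec n × Vec n) =
    (∑ p, M.lam p • ((grad (D.h p) x, (0 : Vec n)) : Vec n × Vec n))
    + (∑ q ∈ Q0 D x, M.mu1 q • ((grad (D.g q) x, (0 : Vec n)) : Vec n × Vec n))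
    - (∑ i ∈ Eact D y, M.mu2 i • ey i)
    + M.mu3 • eAll
    + (∑ i ∈ Hge t x y, M.etaGe i • hvec x y i)
    - (∑ i ∈ Hle t x y, M.etaLe i • hvec x y i)
    + (∑ i ∈ Nact y, M.nu i • ey i)

/-- (x,y) is a KKT point of S(t) with multipliers M. -/
def KKTAt (D : Setting n P Q) (t : ℝ) (x y : Vec n) (M : SMult n P Q) : Prop :=
  feasS D t x y ∧
  (∀ q ∈ Q0 D x, 0 ≤ M.mu1 q) ∧
  (∀ i ∈ Eact D y, 0 ≤ M.mu2 i) ∧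
  0 ≤ M.mu3 ∧
  M.mu3 * ((∑ i, y i) - ((n : ℝ) - D.s)) = 0 ∧
  (∀ i ∈ Hge t x y, 0 ≤ M.etaGe i) ∧
  (∀ i ∈ Hle t x y, 0 ≤ M.etaLe i) ∧
  (∀ i ∈ Nact y, 0 ≤ M.nu i) ∧
  KKTEq D t x y M

/-- (x,y) is a KKT point of S(t). -/
def KKT (D : Setting n P Q) (t : ℝ) (x y : Vec n) : Prop := ∃ M, KKTAt D t x y M

/-- LICQ at a feasible point (x,y) of S(t). -/
def LICQ (D : Setting n P Q) (t : ℝ) (x y : Vec n) : Prop :=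
  ∀ (lam : P → ℝ) (mu1 : Q → ℝ) (mu2 : Fin n → ℝ) (mu3 : ℝ) (eta nu : Fin n → ℝ),
    ((∑ i, y i) ≠ (n : ℝ) - D.s → mu3 = 0) →
    (∑ p, lam p • ((grad (D.h p) x, (0 : Vec n)) : Vec n × Vec n))
    + (∑ q ∈ Q0 D x, mu1 q • ((grad (D.g q) x, (0 : Vec n)) : Vec n × Vec n))
    + (∑ i ∈ Eact D y, mu2 i • ey i)
    + mu3 • eAll
    + (∑ i ∈ Hact t x y, eta i • hvec x y i)
    + (∑ i ∈ Nact y, nu i • ey i) = 0 →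
    (∀ p, lam p = 0) ∧ (∀ q ∈ Q0 D x, mu1 q = 0) ∧ (∀ i ∈ Eact D y, mu2 i = 0) ∧
    mu3 = 0 ∧ (∀ i ∈ Hact t x y, eta i = 0) ∧ (∀ i ∈ Nact y, nu i = 0)

/-- The Lagrange function L^S associated with the KKT point (x̄,ȳ) of S(t)
and multipliers M. -/
def LagS (D : Setting n P Q) (t : ℝ) (xb yb : Vec n) (M : SMult n P Q)
    (z : Vec n × Vec n) : ℝ :=
  D.f z.1 + dot D.c z.2
    - (∑ p, M.lam p * D.h p z.1)
    - (∑ q ∈ Q0 D xb, M.mu1 q * D.g q z.1)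
    + (∑ i ∈ Eact D yb, M.mu2 i * (z.2 i - (1 + D.ε)))
    - M.mu3 * ((∑ i, z.2 i) - ((n : ℝ) - D.s))
    - (∑ i ∈ Hge t xb yb, M.etaGe i * (z.1 i * z.2 i + t))
    + (∑ i ∈ Hle t xb yb, M.etaLe i * (z.1 i * z.2 i - t))
    - (∑ i ∈ Nact yb, M.nu i * z.2 i)

/-- Membership in the tangent space T^S at (x,y) for S(t). -/
def inTS (D : Setting n P Q) (t : ℝ) (x y : Vec n) (ξ : Vec n × Vec n) : Prop :=
  (∀ p, dot (grad (D.h p) x) ξ.1 = 0) ∧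
  (∀ q ∈ Q0 D x, dot (grad (D.g q) x) ξ.1 = 0) ∧
  (∀ i ∈ Eact D y, ξ.2 i = 0) ∧
  ((∑ i, y i) = (n : ℝ) - D.s → (∑ i, ξ.2 i) = 0) ∧
  (∀ i ∈ Hact t x y, y i * ξ.1 i + x i * ξ.2 i = 0) ∧
  (∀ i ∈ Nact y, ξ.2 i = 0)

/-- Nondegenerate KKT point of S(t) with multipliers M (ND1–ND3). -/
def NondegKKTAt (D : Setting n P Q) (t : ℝ) (x y : Vec n) (M : SMult n P Q) : Prop :=
  KKTAt D t x y M ∧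
  LICQ D t x y ∧
  (∀ q ∈ Q0 D x, 0 < M.mu1 q) ∧
  (∀ i ∈ Eact D y, 0 < M.mu2 i) ∧
  (∀ i ∈ Hge t x y, 0 < M.etaGe i) ∧
  (∀ i ∈ Hle t x y, 0 < M.etaLe i) ∧
  (∀ i ∈ Nact y, 0 < M.nu i) ∧
  ((∑ i, y i) = (n : ℝ) - D.s → 0 < M.mu3) ∧
  (∀ ξ, inTS D t x y ξ → (∀ ζ, inTS D t x y ζ → hess (LagS D t x y M) (x, y) ξ ζ = 0) → ξ = 0)

/-- Quadratic index of a KKT point of S(t): number of negative eigenvalues of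
the restricted Hessian of L^S. -/
def QIdx (D : Setting n P Q) (t : ℝ) (x y : Vec n) (M : SMult n P Q) : ℕ :=
  negIndex (hess (LagS D t x y M) (x, y)) (inTS D t x y)

/-!
Nondegeneracy forces `μ₃ > 0`, hence `∑ y = n - s`, and since the `c i` are pairwise different
there is exactly one index with `0 < y i < 1 + ε`; every other `y i` is `0` or `1 + ε`.

Put `t = θ ^ 4`. The active constraints and multipliers of the KKT point of `S(t)` can be predicted
pair by pair: `x i * y i = ± t` with the sign opposite to that of the multiplier `σ i` of `x i`,
except where `x i ≠ 0` and `y i = 0` persists. A biactive pair satisfies `σ x = ρ y` on this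
hyperbola, where `σ` and `ρ` are the two multipliers, and `ρ < 0`; thus both entries are of order
`√t`, and `x = ∓ θ ^ 2 / q`, `y = θ ^ 2 q` with `q = √(|σ| / |ρ|)` removes the singularity at
`t = 0`. The resulting system is `C¹` in `θ`, its linearization at `θ = 0` is injective by
MPOC-LICQ and NDT4, and the inverse function theorem yields solutions for all small `θ`.

When the directions of biactive pairs are scaled by `θ`, the tangent space and the Hessian of the
Lagrangian of `S(t)` have limits. The limit of the Hessian is diagonal in a suitable basis: it is
the restricted Hessian of the T-stationary point together with one entry `- 2 |σ| / q < 0` for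
each biactive pair. Hence the quadratic index is `QI + |a00|`.
-/

/-! ### Inertia of bilinear forms -/

theorem negIndex_eq_finrank {B : Vec n × Vec n → Vec n × Vec n → ℝ} {T : Vec n × Vec n → Prop}
    {N S : Submodule ℝ (Vec n × Vec n)} (hT : ∀ ξ, T ξ ↔ ξ ∈ N ⊔ S)
    (hN : ∀ ξ ∈ N, ξ ≠ 0 → B ξ ξ < 0) (hS : ∀ ξ ∈ S, 0 ≤ B ξ ξ) :
    negIndex B T = Module.finrank ℝ N := by
  refine IsGreatest.csSup_eq
    ⟨⟨N, fun ξ hξ => (hT ξ).2 (Submodule.mem_sup_left hξ), rfl, hN⟩, ?_⟩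
  rintro _ ⟨W, hWT, rfl, hW⟩
  have disjoint : W ⊓ S = ⊥ := (Submodule.eq_bot_iff _).2 fun ξ hξ => by
    by_contra hne
    exact (hW ξ hξ.1 hne).not_ge (hS ξ hξ.2)
  have finrank_sup := Submodule.finrank_sup_add_finrank_inf_eq W S
  rw [disjoint, finrank_bot, add_zero] at finrank_sup
  have sup_le_sup : W ⊔ S ≤ N ⊔ S := sup_le (fun ξ hξ => (hT ξ).1 (hWT ξ hξ)) le_sup_right
  have := Submodule.finrank_mono sup_le_sup
  have := Submodule.finrank_add_le_finrank_add_finrank N S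
  omega

section Gram

variable {ι Z : Type*} [Fintype ι] [AddCommGroup Z] [Module ℝ Z]

/-- The Gram matrix of `b` with respect to `B` is entrywise so close to the diagonal matrix with
entries `d` that `B` has the inertia of `d` on the span of `b`. -/
def NearDiag (B : Z →ₗ[ℝ] Z →ₗ[ℝ] ℝ) (b : ι → Z) (d : ι → ℝ) : Prop :=
  ∃ δ, (∀ j, δ * Fintype.card ι < |d j|) ∧
    ∀ j k, |B (b j) (b k) - if j = k then d j else 0| ≤ δ

theorem NearDiag.of_eq {B : Z →ₗ[ℝ] Z →ₗ[ℝ] ℝ} {b : ι → Z} {d : ι → ℝ} (hd : ∀ j, d j ≠ 0)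
    (h : ∀ j k, B (b j) (b k) = if j = k then d j else 0) : NearDiag B b d :=
  ⟨0, fun j => by rw [zero_mul]; exact abs_pos.2 (hd j), fun j k => by rw [h, sub_self, abs_zero]⟩

theorem eventually_nearDiag {W : Type*} {l : Filter W} {B : W → Z →ₗ[ℝ] Z →ₗ[ℝ] ℝ}
    {b : W → ι → Z} {d : ι → ℝ} (hd : ∀ j, d j ≠ 0)
    (h : ∀ j k, Tendsto (fun w => B w (b w j) (b w k)) l (𝓝 (if j = k then d j else 0))) :
    ∀ᶠ w in l, NearDiag (B w) (b w) d := by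
  have small : ∀ᶠ δ in 𝓝[>] (0 : ℝ), ∀ j, δ * Fintype.card ι < |d j| := by
    refine eventually_all.2 fun j => nhdsWithin_le_nhds ?_
    have : Tendsto (fun δ : ℝ => δ * Fintype.card ι) (𝓝 0) (𝓝 0) := by
      simpa using (tendsto_id (x := 𝓝 (0 : ℝ))).mul_const (Fintype.card ι : ℝ)
    exact this.eventually_lt_const (abs_pos.2 (hd j))
  obtain ⟨δ, hδ, hδ0⟩ := (small.and self_mem_nhdsWithin).exists
  have close : ∀ᶠ w in l, ∀ j k, |B w (b w j) (b w k) - if j = k then d j else 0| ≤ δ := by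
    refine eventually_all.2 fun j => eventually_all.2 fun k => ?_
    filter_upwards [Metric.tendsto_nhds.1 (h j k) δ hδ0] with w hw using hw.le
  exact close.mono fun w hw => ⟨δ, hδ, hw⟩

theorem exists_coeff_of_mem_span_subtype {b : ι → Z} {p : ι → Prop} {ξ : Z}
    (h : ξ ∈ Submodule.span ℝ (Set.range fun j : {j // p j} => b j)) :
    ∃ v : ι → ℝ, (∀ j, ¬ p j → v j = 0) ∧ ∑ j, v j • b j = ξ := by
  obtain ⟨c, rfl⟩ := (Submodule.mem_span_range_iff_exists_fun ℝ).1 h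
  refine ⟨fun j => if hj : p j then c ⟨j, hj⟩ else 0, fun j hj => dif_neg hj, ?_⟩
  rw [← Fintype.sum_subtype_add_sum_subtype p]
  simp [Subtype.prop, fun j : {j // ¬ p j} => j.2]

/-- The vector `v` with the signs of `d` multiplied in, so that pairing it with `v` under the
diagonal form `d` gives a positive definite form. -/
def signed (d v : ι → ℝ) : ι → ℝ := fun j => Real.sign (d j) * v j

namespace NearDiag

variable {B : Z →ₗ[ℝ] Z →ₗ[ℝ] ℝ} {b : ι → Z} {d : ι → ℝ}

theorem ne_zero (hB : NearDiag B b d) (j : ι) : d j ≠ 0 := by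
  obtain ⟨δ, hδ, hBδ⟩ := hB
  have : 0 ≤ δ := (abs_nonneg _).trans (hBδ j j)
  exact abs_pos.1 ((by positivity : 0 ≤ δ * Fintype.card ι).trans_lt (hδ j))

theorem abs_apply_sum_sub_le {δ : ℝ}
    (hδ : ∀ j k, |B (b j) (b k) - if j = k then d j else 0| ≤ δ) (v w : ι → ℝ) :
    |B (∑ j, v j • b j) (∑ k, w k • b k) - ∑ j, d j * (v j * w j)|
      ≤ δ * ((∑ j, |v j|) * ∑ k, |w k|) := by
  have expand : B (∑ j, v j • b j) (∑ k, w k • b k) - ∑ j, d j * (v j * w j)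
      = ∑ j, ∑ k, v j * w k * (B (b j) (b k) - if j = k then d j else 0) := by
    simp only [map_sum, LinearMap.sum_apply, map_smul, LinearMap.smul_apply, smul_eq_mul, mul_sub,
      Finset.sum_sub_distrib, mul_ite, mul_zero, Finset.sum_ite_eq, Finset.mem_univ, if_true]
    rw [Finset.sum_comm]
    simp only [Finset.mul_sum, mul_assoc, mul_left_comm, mul_comm (d _)]
  rw [expand, Finset.sum_mul_sum, Finset.mul_sum]
  refine (Finset.abs_sum_le_sum_abs _ _).trans (Finset.sum_le_sum fun j _ => ?_)
  rw [Finset.mul_sum]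
  refine (Finset.abs_sum_le_sum_abs _ _).trans (Finset.sum_le_sum fun k _ => ?_)
  rw [abs_mul, abs_mul, mul_comm δ]
  exact mul_le_mul_of_nonneg_left (hδ j k) (by positivity)

theorem apply_signed_pos (hB : NearDiag B b d) {v : ι → ℝ} (hv : v ≠ 0) :
    0 < B (∑ j, v j • b j) (∑ j, signed d v j • b j) := by
  have hsign : ∀ j, |Real.sign (d j)| = 1 := fun j => by
    rcases Real.sign_apply_eq_of_ne_zero _ (hB.ne_zero j) with h | h <;> simp [h]
  have abs_signed : ∀ j, |signed d v j| = |v j| := fun j => by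
    rw [signed, abs_mul, hsign, one_mul]
  have diagonal : ∑ j, d j * (v j * signed d v j) = ∑ j, |d j| * v j ^ 2 :=
    Finset.sum_congr rfl fun j _ => by
      rw [← one_mul |d j|, ← hsign j, ← abs_mul, abs_of_nonneg (Real.sign_mul_nonneg _), signed]
      ring
  obtain ⟨δ, hδ, hBδ⟩ := hB
  obtain ⟨j, hj⟩ := Function.ne_iff.1 hv
  have hδ0 : 0 ≤ δ := (abs_nonneg _).trans (hBδ j j)
  have lower := (abs_le.1 (abs_apply_sum_sub_le hBδ v (signed d v))).1
  simp only [abs_signed, diagonal, ← pow_two] at lower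
  have cauchy_schwarz : (∑ j, |v j|) ^ 2 ≤ Fintype.card ι * ∑ j, v j ^ 2 := by
    simpa only [sq_abs, Finset.card_univ] using
      sq_sum_le_card_mul_sum_sq (s := Finset.univ) (f := fun j => |v j|)
  have gap : 0 < ∑ j, (|d j| - δ * Fintype.card ι) * v j ^ 2 :=
    Finset.sum_pos' (fun k _ => mul_nonneg (sub_nonneg.2 (hδ k).le) (sq_nonneg _))
      ⟨j, Finset.mem_univ _, mul_pos (sub_pos.2 (hδ j)) (sq_pos_of_ne_zero hj)⟩
  simp only [sub_mul, Finset.sum_sub_distrib, ← Finset.mul_sum] at gap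
  nlinarith [mul_le_mul_of_nonneg_left cauchy_schwarz hδ0]

theorem eq_zero_of_forall_apply_eq_zero (hB : NearDiag B b d) {v : ι → ℝ}
    (hv : ∀ k, B (∑ j, v j • b j) (b k) = 0) : v = 0 := by
  by_contra hne
  refine (hB.apply_signed_pos hne).ne' ?_
  rw [map_sum, Finset.sum_eq_zero fun k _ => by rw [map_smul, hv k, smul_zero]]

theorem linearIndependent (hB : NearDiag B b d) : LinearIndependent ℝ b :=
  Fintype.linearIndependent_iff.2 fun v hv j => congrFun
    (hB.eq_zero_of_forall_apply_eq_zero (v := v) fun k => by rw [hv, map_zero]; rfl) j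

theorem eq_zero_of_mem_span (hB : NearDiag B b d) {ξ : Z}
    (hξ : ξ ∈ Submodule.span ℝ (Set.range b)) (h : ∀ k, B ξ (b k) = 0) : ξ = 0 := by
  obtain ⟨v, rfl⟩ := (Submodule.mem_span_range_iff_exists_fun ℝ).1 hξ
  simp only [hB.eq_zero_of_forall_apply_eq_zero h, Pi.zero_apply, zero_smul, Finset.sum_const_zero]

theorem apply_self_neg (hB : NearDiag B b d) {ξ : Z} (hne : ξ ≠ 0)
    (hξ : ξ ∈ Submodule.span ℝ (Set.range fun j : {j // d j < 0} => b j)) : B ξ ξ < 0 := by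
  obtain ⟨v, hv, rfl⟩ := exists_coeff_of_mem_span_subtype hξ
  have signed_eq : ∀ k, signed d v k = -v k := fun k => by
    by_cases hk : d k < 0
    · rw [signed, Real.sign_of_neg hk, neg_one_mul]
    · rw [signed, hv k hk, mul_zero, neg_zero]
  have := hB.apply_signed_pos (v := v) (by rintro rfl; simp at hne)
  simpa only [signed_eq, neg_smul, Finset.sum_neg_distrib, map_neg, Left.neg_pos_iff] using this

theorem apply_self_nonneg (hB : NearDiag B b d) {ξ : Z}
    (hξ : ξ ∈ Submodule.span ℝ (Set.range fun j : {j // ¬ d j < 0} => b j)) : 0 ≤ B ξ ξ := by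
  obtain ⟨v, hv, rfl⟩ := exists_coeff_of_mem_span_subtype hξ
  rcases eq_or_ne v 0 with rfl | hne
  · simp
  have signed_eq : ∀ k, signed d v k = v k := fun k => by
    by_cases hk : d k < 0
    · rw [signed, hv k (not_not.2 hk), mul_zero]
    · rw [signed, Real.sign_of_pos ((not_lt.1 hk).lt_of_ne' (hB.ne_zero k)), one_mul]
  simpa only [signed_eq] using (hB.apply_signed_pos hne).le

end NearDiag

theorem NearDiag.negIndex_eq {b : ι → Vec n × Vec n} {d : ι → ℝ}
    {B : (Vec n × Vec n) →ₗ[ℝ] (Vec n × Vec n) →ₗ[ℝ] ℝ} (hB : NearDiag B b d)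
    {T : Vec n × Vec n → Prop} (hT : ∀ ξ, T ξ ↔ ξ ∈ Submodule.span ℝ (Set.range b)) :
    negIndex (fun ξ ζ => B ξ ζ) T = Fintype.card {j // d j < 0} := by
  have range_eq : Set.range b = (Set.range fun j : {j // d j < 0} => b j) ∪
      Set.range fun j : {j // ¬ d j < 0} => b j := by
    ext ξ
    simp only [Set.mem_union, Set.mem_range, Subtype.exists, exists_prop, ← exists_or,
      ← or_and_right, em, true_and]
  simp only [range_eq, Submodule.span_union] at hT
  rw [negIndex_eq_finrank hT (fun ξ hξ hne => hB.apply_self_neg hne hξ)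
    fun ξ hξ => hB.apply_self_nonneg hξ]
  exact finrank_span_eq_card (hB.linearIndependent.comp _ Subtype.val_injective)

end Gram

theorem exists_orthogonal_family {Z : Type*} [AddCommGroup Z] [Module ℝ Z] [FiniteDimensional ℝ Z]
    (B : Z →ₗ[ℝ] Z →ₗ[ℝ] ℝ) (hB : ∀ ξ ζ, B ξ ζ = B ζ ξ) (T : Submodule ℝ Z)
    (hT : ∀ ξ ∈ T, (∀ ζ ∈ T, B ξ ζ = 0) → ξ = 0) :
    ∃ b : Fin (Module.finrank ℝ T) → Z, Submodule.span ℝ (Set.range b) = T ∧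
      (∀ j k, j ≠ k → B (b j) (b k) = 0) ∧ ∀ j, B (b j) (b j) ≠ 0 := by
  let BT : LinearMap.BilinForm ℝ T := B.domRestrict₁₂ T T
  have separating : BT.SeparatingLeft := fun ξ hξ =>
    Subtype.ext (hT ξ ξ.2 fun ζ hζ => hξ ⟨ζ, hζ⟩)
  obtain ⟨v, hv⟩ :=
    LinearMap.BilinForm.exists_orthogonal_basis (B := BT) ⟨fun ξ ζ => hB ξ ζ⟩
  refine ⟨T.subtype ∘ v, ?_, fun j k hjk => hv hjk,
    fun j => hv.not_isOrtho_basis_self_of_separatingLeft separating j⟩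
  rw [Set.range_comp, Submodule.span_image, v.span_eq, Submodule.map_top, Submodule.range_subtype]

/-! ### Perturbation of kernels of independent linear forms -/

theorem linearIndependent_dual_iff_surjective_pi {K Z R : Type*} [Field K] [AddCommGroup Z]
    [Module K Z] [Finite R] {a : R → Z →ₗ[K] K} :
    LinearIndependent K a ↔ Function.Surjective (LinearMap.pi a) := by
  cases nonempty_fintype R
  have dualMap_pi : (LinearMap.pi a).dualMap ∘ (Pi.basisFun K R).toDualEquiv
      = Fintype.linearCombination K a := by
    ext c ξ
    simp [Module.Basis.toDual, Fintype.linearCombination_apply, LinearMap.sum_apply]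
  rw [linearIndependent_iff_injective_fintypeLinearCombination, ← LinearMap.dualMap_injective_iff,
    ← dualMap_pi]
  exact (Pi.basisFun K R).toDualEquiv.toEquiv.injective_comp _

theorem tendsto_clm_of_pointwise {W Z Y : Type*} [NormedAddCommGroup Z] [NormedSpace ℝ Z]
    [FiniteDimensional ℝ Z] [NormedAddCommGroup Y] [NormedSpace ℝ Y] {l : Filter W}
    {N : W → Z →L[ℝ] Y} {N₀ : Z →L[ℝ] Y} (h : ∀ ξ, Tendsto (fun w => N w ξ) l (𝓝 (N₀ ξ))) :
    Tendsto N l (𝓝 N₀) := by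
  let v := Module.finBasis ℝ Z
  obtain ⟨C, -, opNorm_le⟩ := v.exists_opNorm_le (F := Y)
  rw [tendsto_iff_norm_sub_tendsto_zero]
  have bound : Tendsto (fun w => C * ∑ i, ‖N w (v i) - N₀ (v i)‖) l (𝓝 0) := by
    have := (tendsto_finsetSum Finset.univ fun i _ =>
      tendsto_iff_norm_sub_tendsto_zero.1 (h (v i))).const_mul C
    rwa [Finset.sum_const_zero, mul_zero] at this
  refine squeeze_zero (fun _ => norm_nonneg _) (fun w => ?_) bound
  exact opNorm_le (by positivity) fun i =>
    Finset.single_le_sum (f := fun i => ‖N w (v i) - N₀ (v i)‖) (fun _ _ => norm_nonneg _)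
      (Finset.mem_univ i)

theorem eventually_bijective_and_tendsto_inverse {W Z Y : Type*} [NormedAddCommGroup Z]
    [NormedSpace ℝ Z] [FiniteDimensional ℝ Z] [NormedAddCommGroup Y] [NormedSpace ℝ Y]
    {l : Filter W} {N : W → Z →L[ℝ] Y} (N₀ : Z ≃L[ℝ] Y)
    (h : ∀ ξ, Tendsto (fun w => N w ξ) l (𝓝 (N₀ ξ))) :
    (∀ᶠ w in l, ∃ e : Z ≃L[ℝ] Y, (e : Z →L[ℝ] Y) = N w) ∧
      ∀ y, Tendsto (fun w => (N w).inverse y) l (𝓝 (N₀.symm y)) := by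
  have hN : Tendsto N l (𝓝 (N₀ : Z →L[ℝ] Y)) := tendsto_clm_of_pointwise h
  have : CompleteSpace Z := FiniteDimensional.complete ℝ Z
  refine ⟨hN.eventually N₀.nhds, fun y => ?_⟩
  have continuousAt_inverse : ContinuousAt ContinuousLinearMap.inverse (N₀ : Z →L[ℝ] Y) :=
    (contDiffAt_map_inverse (n := 0) N₀).continuousAt
  have := continuousAt_inverse.tendsto.comp hN
  rw [ContinuousLinearMap.inverse_equiv] at this
  exact ((ContinuousLinearMap.apply ℝ Z y).continuous.tendsto _).comp this

theorem sum_smul_zero_single {ι X : Type*} [Fintype ι] [AddCommGroup X] [Module ℝ X] (c d : ι → ℝ) :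
    ∑ j, c j • ((0, Pi.single j (d j)) : X × (ι → ℝ)) = (0, fun j => c j * d j) := by
  refine Prod.ext ?_ (funext fun k => ?_)
  · simp only [Prod.fst_sum, Prod.smul_fst, smul_zero, Finset.sum_const_zero]
  · simp only [Prod.snd_sum, Prod.smul_snd, Finset.sum_apply, Pi.smul_apply, smul_eq_mul,
      Pi.single_apply, mul_ite, mul_zero, Finset.sum_ite_eq, Finset.mem_univ, if_true]

section KernelFrame

variable {Z R ι : Type*} [AddCommGroup Z] [Module ℝ Z] (a : R → Z →ₗ[ℝ] ℝ)
  (B : Z →ₗ[ℝ] Z →ₗ[ℝ] ℝ) (b : ι → Z)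

/-- The linear forms `a` completed by the `B`-products with the family `b`; for a kernel frame
these are the coordinates of a linear isomorphism. -/
def coordinates : Z →ₗ[ℝ] (R → ℝ) × (ι → ℝ) :=
  (LinearMap.pi a).prod (LinearMap.pi fun j => B (b j))

theorem coordinates_apply (ξ : Z) :
    coordinates a B b ξ = (fun r => a r ξ, fun j => B (b j) ξ) := rfl

/-- A finite system of linear forms `a` on `Z` together with a family `b` in its common kernel
which is orthogonal, with nonzero norms `d`, and complete for a bilinear form `B`. -/
structure IsKernelFrame (d : ι → ℝ) : Prop where
  independent : LinearIndependent ℝ a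
  apply_eq_zero : ∀ j r, a r (b j) = 0
  gram : ∀ j k, B (b j) (b k) = if j = k then d j else 0
  ne_zero : ∀ j, d j ≠ 0
  complete : ∀ ξ, (∀ r, a r ξ = 0) → (∀ j, B (b j) ξ = 0) → ξ = 0

namespace IsKernelFrame

variable {a B b} {d : ι → ℝ}

theorem coordinates_frame (h : IsKernelFrame a B b d) (j : ι) :
    coordinates a B b (b j) = (0, Pi.single j (d j)) := by
  rw [coordinates_apply]
  refine Prod.ext (funext (h.apply_eq_zero j)) (funext fun k => ?_)
  simp only [h.gram, Pi.single_apply]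
  split_ifs with hkj
  · rw [hkj]
  · rfl

theorem coordinates_sum_smul [Fintype ι] (h : IsKernelFrame a B b d) (c : ι → ℝ) :
    coordinates a B b (∑ j, c j • b j) = (0, fun j => c j * d j) := by
  simp only [map_sum, map_smul, h.coordinates_frame, sum_smul_zero_single]

variable [Finite ι] [Finite R]

theorem bijective_coordinates (h : IsKernelFrame a B b d) :
    Function.Bijective (coordinates a B b) := by
  cases nonempty_fintype ι
  refine ⟨(injective_iff_map_eq_zero _).2 fun ξ hξ => ?_, fun ⟨u, v⟩ => ?_⟩
  · rw [coordinates_apply, Prod.mk_eq_zero, funext_iff, funext_iff] at hξ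
    exact h.complete ξ hξ.1 hξ.2
  · obtain ⟨ξ, rfl⟩ := linearIndependent_dual_iff_surjective_pi.1 h.independent u
    refine ⟨ξ + ∑ j, ((v j - B (b j) ξ) / d j) • b j, ?_⟩
    rw [map_add, h.coordinates_sum_smul, coordinates_apply, Prod.mk_add_mk, add_zero]
    refine Prod.ext rfl (funext fun k => ?_)
    simp only [Pi.add_apply, div_mul_cancel₀ _ (h.ne_zero k), add_sub_cancel]

theorem exists_perturbation {W Z : Type*} [NormedAddCommGroup Z] [NormedSpace ℝ Z]
    [FiniteDimensional ℝ Z] {l : Filter W} {a : R → Z →ₗ[ℝ] ℝ} {B : Z →ₗ[ℝ] Z →ₗ[ℝ] ℝ} {b : ι → Z}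
    (h : IsKernelFrame a B b d) {a' : W → R → Z →ₗ[ℝ] ℝ}
    (ha : ∀ r ξ, Tendsto (fun w => a' w r ξ) l (𝓝 (a r ξ))) :
    ∃ β : W → ι → Z, (∀ j, Tendsto (fun w => β w j) l (𝓝 (b j))) ∧
      ∀ᶠ w in l, LinearIndependent ℝ (a' w) ∧
        ∀ ξ, (∀ r, a' w r ξ = 0) ↔ ξ ∈ Submodule.span ℝ (Set.range (β w)) := by
  cases nonempty_fintype ι
  cases nonempty_fintype R
  let M₀ := (LinearEquiv.ofBijective _ h.bijective_coordinates).toContinuousLinearEquiv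
  let M := fun w => LinearMap.toContinuousLinearMap (coordinates (a' w) B b)
  have hM : ∀ ξ, Tendsto (fun w => M w ξ) l (𝓝 (M₀ ξ)) := fun ξ =>
    (tendsto_pi_nhds.2 fun r => ha r ξ).prodMk_nhds tendsto_const_nhds
  obtain ⟨eventually_equiv, tendsto_inverse⟩ := eventually_bijective_and_tendsto_inverse M₀ hM
  refine ⟨fun w j => (M w).inverse (M₀ (b j)), fun j => ?_, ?_⟩
  · simpa only [M₀.symm_apply_apply] using tendsto_inverse (M₀ (b j))
  filter_upwards [eventually_equiv] with w ⟨e, he⟩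
  have e_apply : ∀ ξ, e ξ = coordinates (a' w) B b ξ := fun ξ => congrArg (· ξ) he
  have e_symm : ∀ j, e ((M w).inverse (M₀ (b j))) = (0, Pi.single j (d j)) := fun j => by
    rw [← he, ContinuousLinearMap.inverse_equiv]
    exact (e.apply_symm_apply _).trans (h.coordinates_frame j)
  have e_sum : ∀ c : ι → ℝ, e (∑ j, c j • (M w).inverse (M₀ (b j))) = (0, fun j => c j * d j) := by
    intro c
    simp only [map_sum, map_smul, e_symm, sum_smul_zero_single]
  refine ⟨linearIndependent_dual_iff_surjective_pi.2 fun u => ?_, fun ξ => ⟨fun hξ => ?_, ?_⟩⟩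
  · refine ⟨e.symm (u, 0), ?_⟩
    exact congrArg Prod.fst ((e_apply _).symm.trans (e.apply_symm_apply (u, 0)))
  · refine (Submodule.mem_span_range_iff_exists_fun ℝ).2 ⟨fun j => B (b j) ξ / d j, e.injective ?_⟩
    rw [e_sum, e_apply, coordinates_apply]
    exact Prod.ext (funext hξ).symm (funext fun j => div_mul_cancel₀ _ (h.ne_zero j))
  · rw [Submodule.mem_span_range_iff_exists_fun]
    rintro ⟨c, rfl⟩ r
    exact congrFun (congrArg Prod.fst ((e_apply _).symm.trans (e_sum c))) r

end IsKernelFrame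

end KernelFrame

/-! ### First and second derivatives -/

/-- The linear form `v ↦ dot p v`. -/
def dotL (p : Vec n) : Vec n →L[ℝ] ℝ := ∑ i, p i • ContinuousLinearMap.proj i

theorem dotL_apply (p v : Vec n) : dotL p v = dot p v := by
  simp only [dotL, dot, _root_.sum_apply, _root_.smul_apply, ContinuousLinearMap.proj_apply,
    smul_eq_mul]

/-- The second derivative as a bilinear map. -/
abbrev sndDeriv (φ : Vec n → ℝ) (x : Vec n) : Vec n →L[ℝ] Vec n →L[ℝ] ℝ :=
  fderiv ℝ (fderiv ℝ φ) x

theorem fderiv_eq_dot_grad (φ : Vec n → ℝ) (x v : Vec n) :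
    fderiv ℝ φ x v = dot (grad φ x) v := by
  conv_lhs => rw [pi_eq_sum_univ' v]
  simp only [map_sum, map_smul, smul_eq_mul, dot, grad]
  exact Finset.sum_congr rfl fun i _ => mul_comm _ _

theorem tendsto_clm_apply {W Y Z : Type*} [NormedAddCommGroup Y] [NormedSpace ℝ Y]
    [NormedAddCommGroup Z] [NormedSpace ℝ Z] {l : Filter W} {A : W → Y →L[ℝ] Z} {A₀ : Y →L[ℝ] Z}
    {u : W → Y} {u₀ : Y} (hA : Tendsto A l (𝓝 A₀)) (hu : Tendsto u l (𝓝 u₀)) :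
    Tendsto (fun w => A w (u w)) l (𝓝 (A₀ u₀)) :=
  (isBoundedBilinearMap_apply.continuous.tendsto (A₀, u₀)).comp (hA.prodMk_nhds hu)

theorem hasDerivAt_comp_line {Y : Type*} [NormedAddCommGroup Y] [NormedSpace ℝ Y]
    {φ : Vec n → Y} {φ' : Vec n →L[ℝ] Y} {x : Vec n} (hφ : HasFDerivAt φ φ' x) (u : Vec n) :
    HasDerivAt (fun s : ℝ => φ (x + s • u)) (φ' u) 0 := by
  have line : HasDerivAt (fun s : ℝ => x + s • u) u 0 := by
    simpa only [one_smul, id_eq] using ((hasDerivAt_id (0 : ℝ)).smul_const u).const_add x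
  refine HasFDerivAt.comp_hasDerivAt (0 : ℝ) ?_ line
  rwa [zero_smul, add_zero]

section Smooth

variable {φ : Vec n → ℝ} (hφ : ContDiff ℝ 2 φ)

include hφ

theorem contDiff_fderiv_of_two : ContDiff ℝ 1 (fderiv ℝ φ) :=
  hφ.fderiv_right (by norm_num)

theorem contDiff_grad : ContDiff ℝ 1 (grad φ) :=
  contDiff_pi.2 fun _ => (contDiff_fderiv_of_two hφ).clm_apply contDiff_const

theorem hasFDerivAt_of_two (x : Vec n) : HasFDerivAt φ (fderiv ℝ φ x) x :=
  (hφ.differentiable two_ne_zero x).hasFDerivAt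

theorem hasFDerivAt_fderiv (x : Vec n) : HasFDerivAt (fderiv ℝ φ) (sndDeriv φ x) x :=
  ((contDiff_fderiv_of_two hφ).differentiable one_ne_zero x).hasFDerivAt

theorem sndDeriv_symm (x u v : Vec n) : sndDeriv φ x u v = sndDeriv φ x v u :=
  (hφ.contDiffAt.isSymmSndFDerivAt (by simp)) u v

theorem hasDerivAt_grad_line (x u : Vec n) (i : Fin n) :
    HasDerivAt (fun s : ℝ => grad φ (x + s • u) i) (sndDeriv φ x u (Pi.single i 1)) 0 :=
  ((hasDerivAt_comp_line (hasFDerivAt_fderiv hφ x) u).clm_apply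
    (hasDerivAt_const (0 : ℝ) (Pi.single i (1 : ℝ) : Vec n))).congr_deriv (by simp)

theorem hasDerivAt_line (x u : Vec n) :
    HasDerivAt (fun s : ℝ => φ (x + s • u)) (dot (grad φ x) u) 0 := by
  rw [← fderiv_eq_dot_grad]
  exact hasDerivAt_comp_line (hasFDerivAt_of_two hφ x) u

theorem tendsto_sndDeriv {W : Type*} {l : Filter W} {x u v : W → Vec n} {x₀ u₀ v₀ : Vec n}
    (hx : Tendsto x l (𝓝 x₀)) (hu : Tendsto u l (𝓝 u₀)) (hv : Tendsto v l (𝓝 v₀)) :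
    Tendsto (fun w => sndDeriv φ (x w) (u w) (v w)) l (𝓝 (sndDeriv φ x₀ u₀ v₀)) :=
  have continuous_sndDeriv : Continuous (sndDeriv φ) :=
    (contDiff_fderiv_of_two hφ).continuous_fderiv one_ne_zero
  tendsto_clm_apply (tendsto_clm_apply ((continuous_sndDeriv.tendsto x₀).comp hx) hu) hv

end Smooth

section Model

/-- The `i`-th coordinate of the first component. -/
abbrev fstCoord (i : Fin n) : Vec n × Vec n →L[ℝ] ℝ :=
  (ContinuousLinearMap.proj i).comp (ContinuousLinearMap.fst ℝ (Vec n) (Vec n))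

/-- The `i`-th coordinate of the second component. -/
abbrev sndCoord (i : Fin n) : Vec n × Vec n →L[ℝ] ℝ :=
  (ContinuousLinearMap.proj i).comp (ContinuousLinearMap.snd ℝ (Vec n) (Vec n))

variable {φ : Vec n → ℝ} (hφ : ContDiff ℝ 2 φ) {L : Vec n × Vec n → ℝ} (a : ℝ) (p r e : Vec n)
  (hL : ∀ z, L z = φ z.1 + (a + dot p z.1 + dot r z.2) - ∑ i, e i * (z.1 i * z.2 i))

include hφ hL

theorem fderiv_apply_of_model (z ξ : Vec n × Vec n) :
    fderiv ℝ L z ξ = fderiv ℝ φ z.1 ξ.1 + (dot p ξ.1 + dot r ξ.2)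
      - ∑ i, e i * (z.1 i * ξ.2 i + z.2 i * ξ.1 i) := by
  have smooth : HasFDerivAt (fun z : Vec n × Vec n => φ z.1)
      ((fderiv ℝ φ z.1).comp (ContinuousLinearMap.fst ℝ (Vec n) (Vec n))) z :=
    (hasFDerivAt_of_two hφ z.1).comp z hasFDerivAt_fst
  have linear : HasFDerivAt (fun z : Vec n × Vec n => a + (dotL p z.1 + dotL r z.2)) _ z :=
    (((dotL p).hasFDerivAt.comp z hasFDerivAt_fst).add
      ((dotL r).hasFDerivAt.comp z hasFDerivAt_snd)).const_add a
  have bilinear : HasFDerivAt (fun z : Vec n × Vec n => ∑ i, e i * (z.1 i * z.2 i)) _ z :=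
    HasFDerivAt.fun_sum fun i (_ : i ∈ Finset.univ) =>
      ((fstCoord i).hasFDerivAt.mul (sndCoord i).hasFDerivAt).const_mul (e i)
  have model : L = fun z => φ z.1 + (a + (dotL p z.1 + dotL r z.2)) - ∑ i, e i * (z.1 i * z.2 i) :=
    funext fun z => by rw [hL, dotL_apply, dotL_apply, add_assoc a]
  have sum : HasFDerivAt (fun z : Vec n × Vec n =>
      φ z.1 + (a + (dotL p z.1 + dotL r z.2)) - ∑ i, e i * (z.1 i * z.2 i)) _ z :=
    (smooth.add linear).sub bilinear
  rw [model, sum.fderiv]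
  simp [← dotL_apply, _root_.sum_apply, mul_add]

theorem hess_of_model (z ξ ζ : Vec n × Vec n) :
    hess L z ξ ζ = sndDeriv φ z.1 ζ.1 ξ.1 - ∑ i, e i * (ξ.1 i * ζ.2 i + ζ.1 i * ξ.2 i) := by
  have smooth : HasFDerivAt (fun z : Vec n × Vec n => fderiv ℝ φ z.1 ξ.1)
      (((ContinuousLinearMap.apply ℝ ℝ ξ.1).comp (sndDeriv φ z.1)).comp
        (ContinuousLinearMap.fst ℝ (Vec n) (Vec n))) z :=
    (((ContinuousLinearMap.apply ℝ ℝ ξ.1).hasFDerivAt (x := fderiv ℝ φ z.1)).comp z.1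
      (hasFDerivAt_fderiv hφ z.1)).comp z hasFDerivAt_fst
  have linear : HasFDerivAt
      (fun z : Vec n × Vec n => ∑ i, e i * (z.1 i * ξ.2 i + z.2 i * ξ.1 i)) _ z :=
    HasFDerivAt.fun_sum fun i (_ : i ∈ Finset.univ) =>
      (((fstCoord i).hasFDerivAt.mul_const (ξ.2 i)).add
        ((sndCoord i).hasFDerivAt.mul_const (ξ.1 i))).const_mul (e i)
  have sum : HasFDerivAt (fun z : Vec n × Vec n => fderiv ℝ φ z.1 ξ.1 + (dot p ξ.1 + dot r ξ.2)
      - ∑ i, e i * (z.1 i * ξ.2 i + z.2 i * ξ.1 i)) _ z :=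
    (smooth.add_const (dot p ξ.1 + dot r ξ.2)).sub linear
  simp only [hess, fderiv_apply_of_model hφ a p r e hL]
  rw [sum.fderiv]
  simp [_root_.sum_apply, mul_add, add_comm, mul_comm]

end Model

section Lagrangian

variable {K : Type*} [Fintype K] {f : Vec n → ℝ} {ψ : K → Vec n → ℝ}

/-- Second derivative of the Lagrangian `f - ∑ κ k * ψ k`. -/
def lagForm (f : Vec n → ℝ) (ψ : K → Vec n → ℝ) (x : Vec n) (κ : K → ℝ) :
    Vec n →L[ℝ] Vec n →L[ℝ] ℝ :=
  sndDeriv f x - ∑ k, κ k • sndDeriv (ψ k) x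

theorem lagForm_apply (x : Vec n) (κ : K → ℝ) (u v : Vec n) :
    lagForm f ψ x κ u v = sndDeriv f x u v - ∑ k, κ k * sndDeriv (ψ k) x u v := by
  simp [lagForm, _root_.sum_apply]

variable (hf : ContDiff ℝ 2 f) (hψ : ∀ k, ContDiff ℝ 2 (ψ k))

include hf hψ

theorem contDiff_lag (κ : K → ℝ) : ContDiff ℝ 2 fun x => f x - ∑ k, κ k * ψ k x :=
  hf.sub (ContDiff.sum fun k _ => contDiff_const.mul (hψ k))

theorem sndDeriv_lag (x : Vec n) (κ : K → ℝ) :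
    sndDeriv (fun x => f x - ∑ k, κ k * ψ k x) x = lagForm f ψ x κ := by
  have fderiv_lag : fderiv ℝ (fun x => f x - ∑ k, κ k * ψ k x)
      = fun x => fderiv ℝ f x - ∑ k, κ k • fderiv ℝ (ψ k) x := funext fun x =>
    ((hasFDerivAt_of_two hf x).sub (HasFDerivAt.fun_sum fun k (_ : k ∈ Finset.univ) =>
      (hasFDerivAt_of_two (hψ k) x).const_mul (κ k))).fderiv
  rw [sndDeriv, fderiv_lag]
  exact ((hasFDerivAt_fderiv hf x).sub (HasFDerivAt.fun_sum fun k (_ : k ∈ Finset.univ) =>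
    (hasFDerivAt_fderiv (hψ k) x).const_smul (κ k))).fderiv

theorem lagForm_symm (x : Vec n) (κ : K → ℝ) (u v : Vec n) :
    lagForm f ψ x κ u v = lagForm f ψ x κ v u := by
  simp only [lagForm_apply, sndDeriv_symm hf x u, fun k => sndDeriv_symm (hψ k) x u]

theorem tendsto_lagForm {W : Type*} {l : Filter W} {x u v : W → Vec n} {κ : W → K → ℝ}
    {x₀ u₀ v₀ : Vec n} {κ₀ : K → ℝ}
    (hx : Tendsto x l (𝓝 x₀)) (hκ : Tendsto κ l (𝓝 κ₀)) (hu : Tendsto u l (𝓝 u₀))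
    (hv : Tendsto v l (𝓝 v₀)) :
    Tendsto (fun w => lagForm f ψ (x w) (κ w) (u w) (v w)) l
      (𝓝 (lagForm f ψ x₀ κ₀ u₀ v₀)) := by
  simp only [lagForm_apply]
  exact (tendsto_sndDeriv hf hx hu hv).sub (tendsto_finsetSum _ fun k _ =>
    (tendsto_pi_nhds.1 hκ k).mul (tendsto_sndDeriv (hψ k) hx hu hv))

end Lagrangian

/-! ### Linear and bilinear forms on pairs -/

theorem dot_single (i : Fin n) (a : ℝ) (v : Vec n) : dot (Pi.single i a) v = a * v i :=
  single_dotProduct v a i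

theorem dot_single_right (i : Fin n) (a : ℝ) (v : Vec n) : dot v (Pi.single i a) = v i * a :=
  dotProduct_single v a i

theorem dot_zero_left (v : Vec n) : dot 0 v = 0 := zero_dotProduct v

theorem dot_zero_right (v : Vec n) : dot v 0 = 0 := dotProduct_zero v

theorem dot_mul (p s v : Vec n) : dot (p * s) v = dot p (s * v) := by
  simp only [dot, Pi.mul_apply, mul_assoc]

/-- The linear form `ξ ↦ dot p ξ.1 + dot r ξ.2`. -/
def dotPair (p r : Vec n) : Vec n × Vec n →ₗ[ℝ] ℝ :=
  (dotL p : Vec n →ₗ[ℝ] ℝ).coprod (dotL r)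

theorem dotPair_apply (p r : Vec n) (ξ : Vec n × Vec n) :
    dotPair p r ξ = dot p ξ.1 + dot r ξ.2 := by
  simp only [dotPair, LinearMap.coprod_apply, ContinuousLinearMap.coe_coe, dotL_apply]

theorem sum_smul_dotPair {R : Type*} [Fintype R] (a : R → ℝ) (p r : R → Vec n) :
    ∑ j, a j • dotPair (p j) (r j) = dotPair (∑ j, a j • p j) (∑ j, a j • r j) := by
  ext i <;> simp [dotPair_apply, dot_single_right, dot_zero_right]

theorem dotPair_eq_zero_iff {p r : Vec n} : dotPair p r = 0 ↔ p = 0 ∧ r = 0 := by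
  refine ⟨fun h => ⟨funext fun i => ?_, funext fun i => ?_⟩, ?_⟩
  · simpa [dotPair_apply, dot_single_right, dot_zero_right] using
      LinearMap.congr_fun h (Pi.single i 1, 0)
  · simpa [dotPair_apply, dot_single_right, dot_zero_right] using
      LinearMap.congr_fun h (0, Pi.single i 1)
  · rintro ⟨rfl, rfl⟩
    ext i <;> simp [dotPair_apply, dot_zero_left]

/-- Componentwise scaling of both components. -/
def scaleL (s : Vec n) : Vec n × Vec n →ₗ[ℝ] Vec n × Vec n :=
  (LinearMap.mulLeft ℝ s).prodMap (LinearMap.mulLeft ℝ s)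

theorem scaleL_apply (s : Vec n) (ξ : Vec n × Vec n) : scaleL s ξ = (s * ξ.1, s * ξ.2) := rfl

theorem scaleL_bijective {s : Vec n} (hs : ∀ i, s i ≠ 0) : Function.Bijective (scaleL s) := by
  have isUnit : IsUnit s := Pi.isUnit_iff.2 fun i => (hs i).isUnit
  have mul_left : Function.Bijective (s * ·) := IsUnit.isUnit_iff_mulLeft_bijective.1 isUnit
  exact mul_left.prodMap mul_left

/-- The Hessian of a Lagrangian with Hessian `A` in `x` and bilinear terms `-e i * x i * y i`, in
directions whose first component is scaled by `s`. -/
def formL (A : Vec n →L[ℝ] Vec n →L[ℝ] ℝ) (s e : Vec n) :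
    (Vec n × Vec n) →ₗ[ℝ] (Vec n × Vec n) →ₗ[ℝ] ℝ :=
  LinearMap.mk₂ ℝ (fun ξ ζ => A (s * ξ.1) (s * ζ.1)
      - ∑ i, e i * (ξ.1 i * ζ.2 i + ζ.1 i * ξ.2 i))
    (fun ξ ξ' ζ => by
      simp only [Prod.fst_add, Prod.snd_add, Pi.add_apply, mul_add, add_mul, map_add,
        _root_.add_apply, Finset.sum_add_distrib]
      ring)
    (fun a ξ ζ => by
      simp only [Prod.smul_fst, Prod.smul_snd, Pi.smul_apply, mul_smul_comm, map_smul,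
        _root_.smul_apply, smul_eq_mul, mul_sub, Finset.mul_sum]
      exact congrArg _ (Finset.sum_congr rfl fun i _ => by ring))
    (fun ξ ζ ζ' => by
      simp only [Prod.fst_add, Prod.snd_add, Pi.add_apply, mul_add, add_mul, map_add,
        Finset.sum_add_distrib]
      ring)
    (fun a ξ ζ => by
      simp only [Prod.smul_fst, Prod.smul_snd, Pi.smul_apply, mul_smul_comm, map_smul,
        smul_eq_mul, mul_sub, Finset.mul_sum]
      exact congrArg _ (Finset.sum_congr rfl fun i _ => by ring))

theorem formL_apply (A : Vec n →L[ℝ] Vec n →L[ℝ] ℝ) (s e : Vec n) (ξ ζ : Vec n × Vec n) :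
    formL A s e ξ ζ = A (s * ξ.1) (s * ζ.1) - ∑ i, e i * (ξ.1 i * ζ.2 i + ζ.1 i * ξ.2 i) := rfl

theorem formL_scaleL (A : Vec n →L[ℝ] Vec n →L[ℝ] ℝ) (s e : Vec n) (ξ ζ : Vec n × Vec n) :
    formL A 1 e (scaleL s ξ) (scaleL s ζ) = formL A s (e * s ^ 2) ξ ζ := by
  simp only [formL_apply, scaleL_apply, one_mul, Pi.mul_apply, Pi.pow_apply]
  exact congrArg _ (Finset.sum_congr rfl fun i _ => by ring)

/-! ### The regularized stationarity system -/

/-- Behaviour of the pair `(x i, y i)` at a nondegenerate T-stationary point: `y i` at its upper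
bound, strictly between its bounds, zero and staying zero, zero but moved to the hyperbola by
the regularization, or biactive. -/
inductive Kind
  | upper
  | free
  | zero
  | hyper
  | biactive

/-- Local data at a nondegenerate T-stationary point. The constraints `h p` and the active `g q` are
collected in `ψ` with multipliers `κ`; the multiplier of `x` is `σ`, the multiplier of `y i` is
`c i - μ`, and `s i` is the sign which `σ i` takes for the regularized problem. -/
structure LocalData (n : ℕ) (K : Type*) [Fintype K] where
  f : Vec n → ℝ
  ψ : K → Vec n → ℝ
  c : Vec n
  x : Vec n
  y : Vec n
  σ : Vec n
  s : Vec n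
  κ : K → ℝ
  μ : ℝ
  u : ℝ
  tot : ℝ
  kind : Fin n → Kind
  i₀ : Fin n
  contDiff_f : ContDiff ℝ 2 f
  contDiff_ψ : ∀ k, ContDiff ℝ 2 (ψ k)
  stat : ∀ i, grad f x i - ∑ k, κ k * grad (ψ k) x i - σ i = 0
  ψ_eq : ∀ k, ψ k x = 0
  sum_y : ∑ i, y i = tot
  u_pos : 0 < u
  free_iff : ∀ i, kind i = .free ↔ i = i₀
  sign : ∀ i, s i = 1 ∨ s i = -1
  upper : ∀ i, kind i = .upper → x i = 0 ∧ y i = u ∧ 0 < s i * σ i ∧ c i < μ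
  free : ∀ i, kind i = .free → x i = 0 ∧ 0 < y i ∧ y i < u ∧ 0 < s i * σ i ∧ c i = μ
  zero : ∀ i, kind i = .zero → x i ≠ 0 ∧ y i = 0 ∧ σ i = 0 ∧ μ < c i
  hyper : ∀ i, kind i = .hyper → s i * x i < 0 ∧ y i = 0 ∧ σ i = 0 ∧ c i < μ
  biactive : ∀ i, kind i = .biactive → x i = 0 ∧ y i = 0 ∧ 0 < s i * σ i ∧ c i < μ
  licq : ∀ (lam : K → ℝ) (τ : Vec n), (∀ i, x i ≠ 0 → τ i = 0) →
    (∀ i, ∑ k, lam k * grad (ψ k) x i + τ i = 0) → lam = 0 ∧ τ = 0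
  nondeg : ∀ v, (∀ k, dot (grad (ψ k) x) v = 0) → (∀ i, x i = 0 → v i = 0) →
    (∀ v', (∀ k, dot (grad (ψ k) x) v' = 0) → (∀ i, x i = 0 → v' i = 0) →
      lagForm f ψ x κ v v' = 0) → v = 0

/-- Unknowns `(x, κ, y, σ, μ)` of the stationarity system. -/
abbrev State (n : ℕ) (K : Type*) := Vec n × (K → ℝ) × Vec n × Vec n × ℝ

namespace State

variable {K : Type*} (z : State n K)

/-- The component `x` of a state. -/
abbrev x : Vec n := z.1

/-- The multipliers `κ` of the smooth constraints in a state. -/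
abbrev κ : K → ℝ := z.2.1

/-- The component `y` of a state. -/
abbrev y : Vec n := z.2.2.1

/-- The multiplier `σ` of `x` in a state. -/
abbrev σ : Vec n := z.2.2.2.1

/-- The multiplier `μ` of the cardinality constraint in a state. -/
abbrev μ : ℝ := z.2.2.2.2

end State

/-- First defining equation of the pair `(x, y)`; `τ` is the square root of the regularization
parameter and `q` the limit quotient `y / τ` of a biactive pair. -/
def resid₁ (k : Kind) (s u x y τ q : ℝ) : ℝ :=
  match k with
  | .upper => y - u
  | .free => x * y + s * τ ^ 2
  | .zero => y
  | .hyper => x * y + s * τ ^ 2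
  | .biactive => x + s * τ * q⁻¹

/-- Second defining equation of the pair `(x, y)` with multipliers `(σ, ρ)`. -/
def resid₂ (k : Kind) (s x y σ ρ τ q : ℝ) : ℝ :=
  match k with
  | .upper => x * y + s * τ ^ 2
  | .free => σ * x - ρ * y
  | .zero => σ
  | .hyper => σ * x - ρ * y
  | .biactive => y - τ * q

theorem hasDerivAt_add_mul (a b : ℝ) : HasDerivAt (fun r : ℝ => a + r * b) b 0 := by
  simpa using ((hasDerivAt_id (0 : ℝ)).mul_const b).const_add a

theorem hasDerivAt_add_mul_mul (a b a' b' : ℝ) :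
    HasDerivAt (fun r : ℝ => (a + r * b) * (a' + r * b')) (b * a' + a * b') 0 := by
  simpa using (hasDerivAt_add_mul a b).fun_mul (hasDerivAt_add_mul a' b')

namespace LocalData

variable {K : Type*} [Fintype K] (D : LocalData n K)

theorem x_ne_zero_of_hyper {i : Fin n} (hi : D.kind i = .hyper) : D.x i ≠ 0 := fun h =>
  (D.hyper i hi).1.ne (by rw [h, mul_zero])

/-- The unperturbed solution of the stationarity system. -/
def base : State n K := (D.x, D.κ, D.y, D.σ, D.μ)

@[simp] theorem x_base : D.base.x = D.x := rfl

@[simp] theorem y_base : D.base.y = D.y := rfl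

@[simp] theorem σ_base : D.base.σ = D.σ := rfl

@[simp] theorem μ_base : D.base.μ = D.μ := rfl

/-- The quotient `y i / √t` for a biactive pair. -/
def ratio (i : Fin n) (z : State n K) : ℝ :=
  Real.sqrt (D.s i * z.σ i / (z.μ - D.c i))

/-- The regularized stationarity system with parameter `θ`, where `t = θ ^ 4`. -/
def system (w : State n K × ℝ) : State n K :=
  (fun i => grad D.f w.1.x i - ∑ k, w.1.κ k * grad (D.ψ k) w.1.x i - w.1.σ i,
   fun k => D.ψ k w.1.x,
   fun i => resid₁ (D.kind i) (D.s i) D.u (w.1.x i) (w.1.y i) (w.2 ^ 2) (D.ratio i w.1),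
   fun i => resid₂ (D.kind i) (D.s i) (w.1.x i) (w.1.y i) (w.1.σ i) (D.c i - w.1.μ) (w.2 ^ 2)
     (D.ratio i w.1),
   ∑ i, w.1.y i - D.tot)

theorem ratio_arg_pos {i : Fin n} (hi : D.kind i = .biactive) :
    0 < D.s i * D.σ i / (D.μ - D.c i) :=
  have ⟨_, _, sign_σ, c_lt⟩ := D.biactive i hi
  div_pos sign_σ (sub_pos.2 c_lt)

theorem ratio_base_pos {i : Fin n} (hi : D.kind i = .biactive) : 0 < D.ratio i D.base :=
  Real.sqrt_pos.2 (D.ratio_arg_pos hi)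

theorem contDiffAt_ratio {i : Fin n} (hi : D.kind i = .biactive) :
    ContDiffAt ℝ 1 (fun w : State n K × ℝ => D.ratio i w.1) (D.base, 0) := by
  have denominator_ne : D.base.μ - D.c i ≠ 0 := (sub_pos.2 (D.biactive i hi).2.2.2).ne'
  exact (ContDiffAt.div (f := fun w : State n K × ℝ => D.s i * w.1.σ i)
    (by fun_prop) (by fun_prop) denominator_ne).sqrt (D.ratio_arg_pos hi).ne'

theorem contDiffAt_resid₁ (i : Fin n) :
    ContDiffAt ℝ 1 (fun w : State n K × ℝ => resid₁ (D.kind i) (D.s i) D.u (w.1.x i) (w.1.y i)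
      (w.2 ^ 2) (D.ratio i w.1)) (D.base, 0) := by
  cases hi : D.kind i
  case biactive =>
    have inv_ratio := (D.contDiffAt_ratio hi).inv (D.ratio_base_pos hi).ne'
    simp only [resid₁]
    exact ContDiffAt.add (by fun_prop) (ContDiffAt.mul (by fun_prop) inv_ratio)
  all_goals simp only [resid₁]; fun_prop

theorem contDiffAt_resid₂ (i : Fin n) :
    ContDiffAt ℝ 1 (fun w : State n K × ℝ => resid₂ (D.kind i) (D.s i) (w.1.x i) (w.1.y i)
      (w.1.σ i) (D.c i - w.1.μ) (w.2 ^ 2) (D.ratio i w.1)) (D.base, 0) := by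
  cases hi : D.kind i
  case biactive =>
    simp only [resid₂]
    exact ContDiffAt.sub (by fun_prop) (ContDiffAt.mul (by fun_prop) (D.contDiffAt_ratio hi))
  all_goals simp only [resid₂]; fun_prop

theorem contDiffAt_system : ContDiffAt ℝ 1 D.system (D.base, 0) := by
  have contDiff_x : ContDiff ℝ 1 fun w : State n K × ℝ => w.1.x := contDiff_fst.comp contDiff_fst
  have grad_x {φ : Vec n → ℝ} (hφ : ContDiff ℝ 2 φ) (i : Fin n) :
      ContDiffAt ℝ 1 (fun w : State n K × ℝ => grad φ w.1.x i) (D.base, 0) :=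
    ((contDiff_pi.1 (contDiff_grad hφ) i).comp contDiff_x).contDiffAt
  refine .prodMk (contDiffAt_pi.2 fun i => ?_) (.prodMk (contDiffAt_pi.2 fun k => ?_)
    (.prodMk (contDiffAt_pi.2 D.contDiffAt_resid₁)
      (.prodMk (contDiffAt_pi.2 D.contDiffAt_resid₂) (by fun_prop))))
  · exact ((grad_x D.contDiff_f i).sub (.sum fun k _ =>
      .mul (by fun_prop) (grad_x (D.contDiff_ψ k) i))).sub (by fun_prop)
  · exact (((D.contDiff_ψ k).of_le one_le_two).comp contDiff_x).contDiffAt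

theorem system_base : D.system (D.base, 0) = 0 := by
  refine Prod.ext (funext D.stat) (Prod.ext (funext D.ψ_eq)
    (Prod.ext (funext fun i => ?_) (Prod.ext (funext fun i => ?_) (sub_eq_zero.2 D.sum_y))))
  · cases hi : D.kind i
    · simp [system, hi, resid₁, D.upper i hi]
    · simp [system, hi, resid₁, D.free i hi]
    · simp [system, hi, resid₁, D.zero i hi]
    · simp [system, hi, resid₁, D.hyper i hi]
    · simp [system, hi, resid₁, D.biactive i hi]
  · cases hi : D.kind i
    · simp [system, hi, resid₂, D.upper i hi]
    · simp [system, hi, resid₂, D.free i hi]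
    · simp [system, hi, resid₂, D.zero i hi]
    · simp [system, hi, resid₂, D.hyper i hi]
    · simp [system, hi, resid₂, D.biactive i hi]

section Linearization

variable {D} {z : State n K} (hz : fderiv ℝ D.system (D.base, 0) (z, 0) = 0)

include hz

theorem hasDerivAt_system_line (ℓ : State n K →L[ℝ] ℝ) :
    HasDerivAt (fun r : ℝ => ℓ (D.system (D.base + r • z, 0))) 0 0 := by
  have line : HasDerivAt (fun r : ℝ => (D.base + r • z, (0 : ℝ))) (z, 0) 0 := by
    simpa using (((hasDerivAt_id (0 : ℝ)).smul_const z).const_add D.base).prodMk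
      (hasDerivAt_const (0 : ℝ) (0 : ℝ))
  have system : HasFDerivAt D.system (fderiv ℝ D.system (D.base, 0)) (D.base, 0) :=
    (D.contDiffAt_system.differentiableAt one_ne_zero).hasFDerivAt
  have system_line := system.comp_hasDerivAt_of_eq (0 : ℝ) line (by simp)
  exact (ℓ.hasFDerivAt.comp_hasDerivAt (0 : ℝ) system_line).congr_deriv (by rw [hz, map_zero])

theorem lagForm_single_of_ker (i : Fin n) :
    lagForm D.f D.ψ D.x D.κ z.x (Pi.single i 1)
      = ∑ k, z.κ k * grad (D.ψ k) D.x i + z.σ i := by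
  have stationarity : HasDerivAt (fun r : ℝ => grad D.f (D.x + r • z.x) i
      - ∑ k, (D.κ k + r * z.κ k) * grad (D.ψ k) (D.x + r • z.x) i - (D.σ i + r * z.σ i)) _ 0 :=
    ((hasDerivAt_grad_line D.contDiff_f D.x z.x i).fun_sub
      (HasDerivAt.fun_sum fun k (_ : k ∈ Finset.univ) =>
        (hasDerivAt_add_mul (D.κ k) (z.κ k)).fun_mul
          (hasDerivAt_grad_line (D.contDiff_ψ k) D.x z.x i))).fun_sub (hasDerivAt_add_mul _ _)
  have derivative_eq := stationarity.unique (hasDerivAt_system_line hz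
    ((ContinuousLinearMap.proj i).comp (ContinuousLinearMap.fst ℝ _ _)) :)
  simp only [zero_mul, add_zero, zero_smul, Finset.sum_add_distrib] at derivative_eq
  rw [lagForm_apply]
  linarith

theorem dot_grad_of_ker (k : K) : dot (grad (D.ψ k) D.x) z.x = 0 :=
  (hasDerivAt_line (D.contDiff_ψ k) D.x z.x).unique (hasDerivAt_system_line hz
    ((ContinuousLinearMap.proj k).comp ((ContinuousLinearMap.fst ℝ _ _).comp
      (ContinuousLinearMap.snd ℝ _ _))))

theorem sum_y_of_ker : ∑ i, z.y i = 0 :=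
  have sum : HasDerivAt (fun r : ℝ => ∑ i, (D.y i + r * z.y i) - D.tot) _ 0 :=
    (HasDerivAt.fun_sum fun i (_ : i ∈ Finset.univ) =>
      hasDerivAt_add_mul (D.y i) (z.y i)).sub_const D.tot
  sum.unique (hasDerivAt_system_line hz ((ContinuousLinearMap.snd ℝ _ _).comp
    ((ContinuousLinearMap.snd ℝ _ _).comp ((ContinuousLinearMap.snd ℝ _ _).comp
      (ContinuousLinearMap.snd ℝ _ _)))))

theorem hasDerivAt_resid₁_of_ker (i : Fin n) :
    HasDerivAt (fun r : ℝ => resid₁ (D.kind i) (D.s i) D.u (D.x i + r * z.x i)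
      (D.y i + r * z.y i) (0 ^ 2) (D.ratio i (D.base + r • z))) 0 0 :=
  hasDerivAt_system_line hz ((ContinuousLinearMap.proj i).comp ((ContinuousLinearMap.fst ℝ _ _).comp
    ((ContinuousLinearMap.snd ℝ _ _).comp (ContinuousLinearMap.snd ℝ _ _))))

theorem hasDerivAt_resid₂_of_ker (i : Fin n) :
    HasDerivAt (fun r : ℝ => resid₂ (D.kind i) (D.s i) (D.x i + r * z.x i) (D.y i + r * z.y i)
      (D.σ i + r * z.σ i) (D.c i - (D.μ + r * z.μ)) (0 ^ 2) (D.ratio i (D.base + r • z))) 0 0 :=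
  hasDerivAt_system_line hz ((ContinuousLinearMap.proj i).comp ((ContinuousLinearMap.fst ℝ _ _).comp
    ((ContinuousLinearMap.snd ℝ _ _).comp ((ContinuousLinearMap.snd ℝ _ _).comp
      (ContinuousLinearMap.snd ℝ _ _)))))

theorem balance_of_ker {i : Fin n} (hi : D.kind i = .free ∨ D.kind i = .hyper) :
    z.σ i * D.x i + D.σ i * z.x i - (-z.μ * D.y i + (D.c i - D.μ) * z.y i) = 0 := by
  have balance : HasDerivAt (fun r : ℝ => (D.σ i + r * z.σ i) * (D.x i + r * z.x i)
      - (D.c i - (D.μ + r * z.μ)) * (D.y i + r * z.y i)) 0 0 := by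
    rcases hi with hi | hi <;> simpa only [hi, resid₂] using hasDerivAt_resid₂_of_ker hz i
  refine HasDerivAt.unique ?_ balance
  simpa using (hasDerivAt_add_mul_mul (D.σ i) (z.σ i) (D.x i) (z.x i)).fun_sub
    (((hasDerivAt_add_mul D.μ z.μ).const_sub (D.c i)).fun_mul (hasDerivAt_add_mul (D.y i) (z.y i)))

theorem product_of_ker {i : Fin n}
    (hi : D.kind i = .upper ∨ D.kind i = .free ∨ D.kind i = .hyper) :
    z.x i * D.y i + D.x i * z.y i = 0 := by
  refine (hasDerivAt_add_mul_mul _ _ _ _).unique ?_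
  rcases hi with hi | hi | hi
  · simpa [hi, resid₂] using hasDerivAt_resid₂_of_ker hz i
  · simpa [hi, resid₁] using hasDerivAt_resid₁_of_ker hz i
  · simpa [hi, resid₁] using hasDerivAt_resid₁_of_ker hz i

theorem x_apply_of_ker {i : Fin n} (hx : D.x i = 0) : z.x i = 0 := by
  cases hi : D.kind i
  case zero => exact absurd hx (D.zero i hi).1
  case hyper => exact absurd hx (D.x_ne_zero_of_hyper hi)
  case upper =>
    simpa [hx, (D.upper i hi).2.1, D.u_pos.ne'] using product_of_ker hz (.inl hi)
  case free =>
    simpa [hx, (D.free i hi).2.1.ne'] using product_of_ker hz (.inr (.inl hi))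
  case biactive =>
    refine (hasDerivAt_add_mul (D.x i) _).unique ?_
    simpa [hi, resid₁] using hasDerivAt_resid₁_of_ker hz i

theorem y_apply_of_ker_of_ne {i : Fin n} (hi₀ : i ≠ D.i₀) : z.y i = 0 := by
  cases hi : D.kind i
  case free => exact absurd ((D.free_iff i).1 hi) hi₀
  case upper =>
    refine ((hasDerivAt_add_mul (D.y i) _).sub_const D.u).unique ?_
    simpa only [hi, resid₁] using hasDerivAt_resid₁_of_ker hz i
  case zero =>
    refine (hasDerivAt_add_mul (D.y i) _).unique ?_
    simpa only [hi, resid₁] using hasDerivAt_resid₁_of_ker hz i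
  case hyper =>
    simpa [(D.hyper i hi).2.1, D.x_ne_zero_of_hyper hi] using product_of_ker hz (.inr (.inr hi))
  case biactive =>
    refine (hasDerivAt_add_mul (D.y i) _).unique ?_
    simpa [hi, resid₂] using hasDerivAt_resid₂_of_ker hz i

theorem y_of_ker : z.y = 0 := funext fun i => by
  by_cases hi : i = D.i₀
  · rw [hi, ← Finset.sum_eq_single_of_mem D.i₀ (Finset.mem_univ _) fun j _ hj =>
      y_apply_of_ker_of_ne hz hj]
    exact sum_y_of_ker hz
  · exact y_apply_of_ker_of_ne hz hi

theorem μ_of_ker : z.μ = 0 := by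
  have free := (D.free_iff D.i₀).2 rfl
  have ⟨x_eq, y_pos, _⟩ := D.free _ free
  simpa [x_apply_of_ker hz x_eq, y_of_ker hz, x_eq, y_pos.ne'] using balance_of_ker hz (.inl free)

theorem σ_apply_of_ker {i : Fin n} (hx : D.x i ≠ 0) : z.σ i = 0 := by
  cases hi : D.kind i
  case upper => exact absurd (D.upper i hi).1 hx
  case free => exact absurd (D.free i hi).1 hx
  case biactive => exact absurd (D.biactive i hi).1 hx
  case zero =>
    refine (hasDerivAt_add_mul (D.σ i) _).unique ?_
    simpa only [hi, resid₂] using hasDerivAt_resid₂_of_ker hz i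
  case hyper =>
    simpa [y_of_ker hz, (D.hyper i hi).2.1, (D.hyper i hi).2.2.1, hx] using
      balance_of_ker hz (.inr hi)

theorem x_of_ker : z.x = 0 := by
  refine D.nondeg z.x (dot_grad_of_ker hz) (fun i => x_apply_of_ker hz) fun v hv hv₀ => ?_
  have σ_mul (i : Fin n) : v i * z.σ i = 0 := by
    by_cases hx : D.x i = 0
    · rw [hv₀ i hx, zero_mul]
    · rw [σ_apply_of_ker hz hx, mul_zero]
  calc lagForm D.f D.ψ D.x D.κ z.x v
      = ∑ i, v i * lagForm D.f D.ψ D.x D.κ z.x (Pi.single i 1) := by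
        conv_lhs => rw [pi_eq_sum_univ' v]
        simp only [map_sum, map_smul, smul_eq_mul]
    _ = ∑ i, ∑ k, z.κ k * (grad (D.ψ k) D.x i * v i) :=
        Finset.sum_congr rfl fun i _ => by
          rw [lagForm_single_of_ker hz, mul_add, σ_mul, add_zero, Finset.mul_sum]
          exact Finset.sum_congr rfl fun k _ => by ring
    _ = ∑ k, z.κ k * dot (grad (D.ψ k) D.x) v := by
        rw [Finset.sum_comm]
        simp only [dot, Finset.mul_sum]
    _ = 0 := Finset.sum_eq_zero fun k _ => by rw [hv, mul_zero]

theorem eq_zero_of_ker : z = 0 := by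
  obtain ⟨κ_eq, σ_eq⟩ := D.licq z.κ z.σ (fun i => σ_apply_of_ker hz) fun i => by
    rw [← lagForm_single_of_ker hz, x_of_ker hz, map_zero, _root_.zero_apply]
  exact Prod.ext (x_of_ker hz) <| Prod.ext κ_eq <| Prod.ext (y_of_ker hz) <|
    Prod.ext σ_eq (μ_of_ker hz)

end Linearization

theorem fderiv_system_prodMk_injective :
    Function.Injective (fderiv ℝ (fun w : State n K × ℝ => (D.system w, w.2)) (D.base, 0)) := by
  have fderiv_eq : fderiv ℝ (fun w : State n K × ℝ => (D.system w, w.2)) (D.base, 0)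
      = (fderiv ℝ D.system (D.base, 0)).prod (ContinuousLinearMap.snd ℝ _ _) :=
    ((D.contDiffAt_system.differentiableAt one_ne_zero).hasFDerivAt.prodMk hasFDerivAt_snd).fderiv
  rw [fderiv_eq]
  refine (injective_iff_map_eq_zero _).2 ?_
  rintro ⟨z, r⟩ h
  obtain rfl : r = 0 := congrArg Prod.snd h
  rw [eq_zero_of_ker (congrArg Prod.fst h), Prod.mk_zero_zero]

theorem eventually_exists_solution {p : State n K × ℝ → Prop}
    (hp : ∀ᶠ w in 𝓝 (D.base, (0 : ℝ)) ⊓ 𝓟 {w | D.system w = 0 ∧ 0 < w.2}, p w) :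
    ∀ᶠ θ in 𝓝[>] (0 : ℝ), ∃ z : State n K, p (z, θ) := by
  have nhds_map := (D.contDiffAt_system.prodMk contDiffAt_snd).hasStrictFDerivAt one_ne_zero
    |>.map_nhds_eq_of_surj (LinearMap.range_eq_top.2
      (LinearMap.injective_iff_surjective.1 D.fderiv_system_prodMk_injective))
  rw [eventually_inf_principal] at hp
  have image_mem := Filter.image_mem_map (m := fun w : State n K × ℝ => (D.system w, w.2)) hp
  rw [nhds_map, D.system_base] at image_mem
  have tendsto_prodMk : Tendsto (fun θ : ℝ => ((0 : State n K), θ)) (𝓝[>] 0) (𝓝 (0, 0)) :=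
    tendsto_const_nhds.prodMk_nhds (tendsto_id.mono_left nhdsWithin_le_nhds)
  filter_upwards [tendsto_prodMk.eventually image_mem, self_mem_nhdsWithin] with θ hθ θ_pos
  obtain ⟨⟨z, θ'⟩, hw, he⟩ := hθ
  obtain rfl : θ' = θ := congrArg Prod.snd he
  exact ⟨z, hw ⟨congrArg Prod.fst he, θ_pos⟩⟩

/-! ### Solutions near the base point -/

/-- Solutions of the regularized system with positive parameter near the base point. -/
def near : Filter (State n K × ℝ) :=
  𝓝 (D.base, (0 : ℝ)) ⊓ 𝓟 {w | D.system w = 0 ∧ 0 < w.2}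

/-- A solution of the system with positive parameter which inherits the strict inequalities of the
base point. -/
structure IsRegular (w : State n K × ℝ) : Prop where
  system_eq : D.system w = 0
  pos : 0 < w.2
  sign_σ_of_x_eq : ∀ i, D.x i = 0 → 0 < D.s i * w.1.σ i
  sign_x : ∀ i, D.kind i = .hyper → D.s i * w.1.x i < 0
  μ_lt : ∀ i, D.kind i = .zero → w.1.μ < D.c i
  lt_μ : ∀ i, D.kind i = .hyper ∨ D.kind i = .biactive → D.c i < w.1.μ
  upper_neg : ∀ i, D.kind i = .upper → D.c i - w.1.μ - w.1.x i * w.1.σ i / w.1.y i < 0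
  y_pos_of_free : ∀ i, D.kind i = .free → 0 < w.1.y i
  y_lt : ∀ i, D.kind i ≠ .upper → w.1.y i < D.u

theorem tendsto_near {Y : Type*} [TopologicalSpace Y] {p : State n K × ℝ → Y}
    (hp : ContinuousAt p (D.base, 0)) : Tendsto p D.near (𝓝 (p (D.base, 0))) :=
  hp.tendsto.mono_left inf_le_left

theorem eventually_near_system : ∀ᶠ w in D.near, D.system w = 0 ∧ 0 < w.2 :=
  eventually_inf_principal.2 (Eventually.of_forall fun _ h => h)

theorem eventually_near_lt {ι : Type*} [Finite ι] {S : ι → Prop} {p q : ι → State n K × ℝ → ℝ}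
    (h : ∀ i, S i → ContinuousAt (p i) (D.base, 0) ∧ ContinuousAt (q i) (D.base, 0) ∧
      p i (D.base, 0) < q i (D.base, 0)) :
    ∀ᶠ w in D.near, ∀ i, S i → p i w < q i w :=
  eventually_all.2 fun i => Filter.eventually_imp_distrib_left.2 fun hi =>
    have ⟨hp, hq, lt⟩ := h i hi
    (D.tendsto_near hp).eventually_lt (D.tendsto_near hq) lt

theorem sign_σ_base {i : Fin n} (hx : D.x i = 0) : 0 < D.s i * D.σ i := by
  cases hi : D.kind i
  case upper => exact (D.upper i hi).2.2.1
  case free => exact (D.free i hi).2.2.2.1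
  case zero => exact absurd hx (D.zero i hi).1
  case hyper => exact absurd hx (D.x_ne_zero_of_hyper hi)
  case biactive => exact (D.biactive i hi).2.2.1

theorem y_base_lt {i : Fin n} (h : D.kind i ≠ .upper) : D.y i < D.u := by
  cases hi : D.kind i
  case upper => exact absurd hi h
  case free => exact (D.free i hi).2.2.1
  case zero => exact (D.zero i hi).2.1 ▸ D.u_pos
  case hyper => exact (D.hyper i hi).2.1 ▸ D.u_pos
  case biactive => exact (D.biactive i hi).2.1 ▸ D.u_pos

theorem continuousAt_div_y_of_upper {i : Fin n} (hi : D.kind i = .upper)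
    {p : State n K × ℝ → ℝ} (hp : ContinuousAt p (D.base, 0)) :
    ContinuousAt (fun w => p w / w.1.y i) (D.base, 0) := by
  have y_ne : D.base.y i ≠ 0 := by
    rw [y_base, (D.upper i hi).2.1]
    exact D.u_pos.ne'
  exact hp.div (by fun_prop) y_ne

theorem eventually_isRegular : ∀ᶠ w in D.near, D.IsRegular w := by
  have sign_σ : ∀ᶠ w in D.near, ∀ i, D.x i = 0 → 0 < D.s i * w.1.σ i :=
    D.eventually_near_lt fun i hx => ⟨by fun_prop, by fun_prop, D.sign_σ_base hx⟩
  have sign_x : ∀ᶠ w in D.near, ∀ i, D.kind i = .hyper → D.s i * w.1.x i < 0 :=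
    D.eventually_near_lt fun i hi => ⟨by fun_prop, by fun_prop, (D.hyper i hi).1⟩
  have μ_lt : ∀ᶠ w in D.near, ∀ i, D.kind i = .zero → w.1.μ < D.c i :=
    D.eventually_near_lt fun i hi => ⟨by fun_prop, by fun_prop, (D.zero i hi).2.2.2⟩
  have lt_μ : ∀ᶠ w in D.near, ∀ i, D.kind i = .hyper ∨ D.kind i = .biactive → D.c i < w.1.μ :=
    D.eventually_near_lt fun i hi => ⟨by fun_prop, by fun_prop,
      hi.elim (fun hi => (D.hyper i hi).2.2.2) fun hi => (D.biactive i hi).2.2.2⟩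
  have upper_neg : ∀ᶠ w in D.near, ∀ i, D.kind i = .upper →
      D.c i - w.1.μ - w.1.x i * w.1.σ i / w.1.y i < 0 :=
    D.eventually_near_lt fun i hi =>
      ⟨.sub (by fun_prop) (D.continuousAt_div_y_of_upper hi (by fun_prop)), by fun_prop, by
        simpa [(D.upper i hi).1] using (D.upper i hi).2.2.2⟩
  have y_pos : ∀ᶠ w in D.near, ∀ i, D.kind i = .free → 0 < w.1.y i :=
    D.eventually_near_lt fun i hi => ⟨by fun_prop, by fun_prop, (D.free i hi).2.1⟩
  have y_lt : ∀ᶠ w in D.near, ∀ i, D.kind i ≠ .upper → w.1.y i < D.u :=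
    D.eventually_near_lt fun i hi => ⟨by fun_prop, by fun_prop, D.y_base_lt hi⟩
  filter_upwards [sign_σ, sign_x, μ_lt, lt_μ, upper_neg, y_pos, y_lt, D.eventually_near_system]
    with w sign_σ sign_x μ_lt lt_μ upper_neg y_pos y_lt ⟨system_eq, pos⟩
  exact ⟨system_eq, pos, sign_σ, sign_x, μ_lt, lt_μ, upper_neg, y_pos, y_lt⟩

theorem sign_mul_self (i : Fin n) : D.s i * D.s i = 1 := by
  rcases D.sign i with hs | hs <;> norm_num [hs]

theorem sign_ne_zero (i : Fin n) : D.s i ≠ 0 := left_ne_zero_of_mul_eq_one (D.sign_mul_self i)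

namespace IsRegular

variable {D} {w : State n K × ℝ} (h : D.IsRegular w)

include h

theorem stat (i : Fin n) :
    grad D.f w.1.x i - ∑ k, w.1.κ k * grad (D.ψ k) w.1.x i - w.1.σ i = 0 :=
  congrFun (congrArg State.x h.system_eq) i

theorem ψ_eq (k : K) : D.ψ k w.1.x = 0 :=
  congrFun (congrArg State.κ h.system_eq) k

theorem sum_y : ∑ i, w.1.y i = D.tot :=
  sub_eq_zero.1 (congrArg State.μ h.system_eq)

theorem resid₁_eq (i : Fin n) : resid₁ (D.kind i) (D.s i) D.u (w.1.x i) (w.1.y i) (w.2 ^ 2)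
    (D.ratio i w.1) = 0 :=
  congrFun (congrArg State.y h.system_eq) i

theorem resid₂_eq (i : Fin n) : resid₂ (D.kind i) (D.s i) (w.1.x i) (w.1.y i) (w.1.σ i)
    (D.c i - w.1.μ) (w.2 ^ 2) (D.ratio i w.1) = 0 :=
  congrFun (congrArg State.σ h.system_eq) i

variable {i : Fin n}

theorem y_eq_of_upper (hi : D.kind i = .upper) : w.1.y i = D.u := by
  simpa only [hi, resid₁, sub_eq_zero] using h.resid₁_eq i

theorem y_eq_of_zero (hi : D.kind i = .zero) : w.1.y i = 0 := by
  simpa only [hi, resid₁] using h.resid₁_eq i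

theorem σ_eq_of_zero (hi : D.kind i = .zero) : w.1.σ i = 0 := by
  simpa only [hi, resid₂] using h.resid₂_eq i

theorem x_eq_of_biactive (hi : D.kind i = .biactive) :
    w.1.x i = -(D.s i * w.2 ^ 2 * (D.ratio i w.1)⁻¹) :=
  eq_neg_of_add_eq_zero_left (by simpa only [hi, resid₁] using h.resid₁_eq i)

theorem y_eq_of_biactive (hi : D.kind i = .biactive) : w.1.y i = w.2 ^ 2 * D.ratio i w.1 := by
  simpa only [hi, resid₂, sub_eq_zero] using h.resid₂_eq i

theorem ratio_arg_pos (hi : D.kind i = .biactive) :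
    0 < D.s i * w.1.σ i / (w.1.μ - D.c i) :=
  div_pos (h.sign_σ_of_x_eq i (D.biactive i hi).1) (sub_pos.2 (h.lt_μ i (.inr hi)))

theorem ratio_pos (hi : D.kind i = .biactive) : 0 < D.ratio i w.1 :=
  Real.sqrt_pos.2 (h.ratio_arg_pos hi)

theorem ratio_sq_mul (hi : D.kind i = .biactive) :
    D.ratio i w.1 ^ 2 * (w.1.μ - D.c i) = D.s i * w.1.σ i := by
  rw [ratio, Real.sq_sqrt (h.ratio_arg_pos hi).le]
  exact div_mul_cancel₀ _ (sub_pos.2 (h.lt_μ i (.inr hi))).ne'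

theorem x_ne_zero (hi : D.kind i = .hyper) : w.1.x i ≠ 0 := fun hx =>
  (h.sign_x i hi).ne (by rw [hx, mul_zero])

theorem mul_eq (hi : D.kind i ≠ .zero) : w.1.x i * w.1.y i = -(D.s i * w.2 ^ 4) := by
  have h₁ := h.resid₁_eq i
  have h₂ := h.resid₂_eq i
  cases hk : D.kind i <;> simp only [hk, resid₁, resid₂] at h₁ h₂
  case upper => linear_combination h₂
  case free => linear_combination h₁
  case zero => exact absurd hk hi
  case hyper => linear_combination h₁
  case biactive =>
    have ratio_ne := (h.ratio_pos hk).ne'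
    rw [h.x_eq_of_biactive hk, h.y_eq_of_biactive hk]
    field_simp

theorem y_pos (hi : D.kind i ≠ .zero) : 0 < w.1.y i := by
  have θ_pos := h.pos
  cases hk : D.kind i
  case upper => exact h.y_eq_of_upper hk ▸ D.u_pos
  case free => exact h.y_pos_of_free i hk
  case zero => exact absurd hk hi
  case hyper =>
    have product : (D.s i * w.1.x i) * w.1.y i = -w.2 ^ 4 := by
      rw [mul_assoc, h.mul_eq hi]
      linear_combination -w.2 ^ 4 * D.sign_mul_self i
    refine pos_of_mul_neg_right (a := D.s i * w.1.x i) ?_ (h.sign_x i hk).le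
    rw [product]
    exact neg_neg_of_pos (by positivity)
  case biactive =>
    rw [h.y_eq_of_biactive hk]
    exact mul_pos (by positivity) (h.ratio_pos hk)

theorem mult_eq (hi : D.kind i ≠ .zero) (hi' : D.kind i ≠ .upper) :
    w.1.σ i * w.1.x i = (D.c i - w.1.μ) * w.1.y i := by
  have h₂ := h.resid₂_eq i
  cases hk : D.kind i <;> simp only [hk, resid₂] at h₂
  case upper => exact absurd hk hi'
  case free => exact sub_eq_zero.1 h₂
  case zero => exact absurd hk hi
  case hyper => exact sub_eq_zero.1 h₂
  case biactive =>
    have ratio_ne := (h.ratio_pos hk).ne'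
    rw [h.x_eq_of_biactive hk, h.y_eq_of_biactive hk]
    field_simp
    linear_combination w.2 ^ 2 * h.ratio_sq_mul hk

theorem sign_σ (hi : D.kind i ≠ .zero) : 0 < D.s i * w.1.σ i := by
  by_cases hk : D.kind i = .hyper
  · refine pos_of_mul_neg_left (b := D.s i * w.1.x i) ?_ (h.sign_x i hk).le
    calc D.s i * w.1.σ i * (D.s i * w.1.x i) = w.1.σ i * w.1.x i := by
          linear_combination w.1.σ i * w.1.x i * D.sign_mul_self i
      _ = (D.c i - w.1.μ) * w.1.y i := h.mult_eq hi (by simp [hk])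
      _ < 0 := mul_neg_of_neg_of_pos (sub_neg.2 (h.lt_μ i (.inl hk))) (h.y_pos hi)
  · refine h.sign_σ_of_x_eq i ?_
    cases hk' : D.kind i
    case upper => exact (D.upper i hk').1
    case free => exact (D.free i hk').1
    case zero => exact absurd hk' hi
    case hyper => exact absurd hk' hk
    case biactive => exact (D.biactive i hk').1

end IsRegular

/-! ### The rescaled tangent space and Hessian -/

/-- Scaling of the directions: biactive pairs are scaled by `θ`. -/
def scale (w : State n K × ℝ) : Vec n := fun i => if D.kind i = .biactive then w.2 else 1

/-- The bilinear coefficients of the Hessian of the Lagrangian of `S(t)` in scaled directions. -/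
def cross (w : State n K × ℝ) : Vec n := fun i =>
  match D.kind i with
  | .upper => w.1.σ i / w.1.y i
  | .free => w.1.σ i / w.1.y i
  | .zero => 0
  | .hyper => (D.c i - w.1.μ) / w.1.x i
  | .biactive => w.1.σ i / D.ratio i w.1

/-- The coefficients of the linearized constraint on the pair `i` in scaled directions; for a
biactive pair, it is also divided by `θ ^ 3` in order to have a limit. -/
def coef (w : State n K × ℝ) (i : Fin n) : ℝ × ℝ :=
  match D.kind i with
  | .upper => (0, 1)
  | .free => (w.1.y i, w.1.x i)
  | .zero => (0, 1)
  | .hyper => (w.1.y i, w.1.x i)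
  | .biactive => (D.ratio i w.1, -(D.s i * (D.ratio i w.1)⁻¹))

/-- Index set of the constraints defining the tangent space: the smooth constraints, one constraint
per pair, a second one per pair of upper kind, and the cardinality constraint. -/
abbrev Row := K ⊕ (Fin n ⊕ ({i // D.kind i = .upper} ⊕ Unit))

/-- Coefficients of the rescaled linearized constraints in the first component. -/
def rowFst (w : State n K × ℝ) : D.Row → Vec n
  | .inl k => grad (D.ψ k) w.1.x * D.scale w
  | .inr (.inl i) => Pi.single i (D.coef w i).1
  | .inr (.inr (.inl i)) => Pi.single i.1 (w.1.y i.1)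
  | .inr (.inr (.inr _)) => 0

/-- Coefficients of the rescaled linearized constraints in the second component. -/
def rowSnd (w : State n K × ℝ) : D.Row → Vec n
  | .inl _ => 0
  | .inr (.inl i) => Pi.single i (D.coef w i).2
  | .inr (.inr (.inl i)) => Pi.single i.1 (w.1.x i.1)
  | .inr (.inr (.inr _)) => D.scale w

/-- The rescaled linearized constraints. -/
def row (w : State n K × ℝ) (r : D.Row) : Vec n × Vec n →ₗ[ℝ] ℝ :=
  dotPair (D.rowFst w r) (D.rowSnd w r)

/-- The rescaled Hessian of the Lagrangian. -/
def form (w : State n K × ℝ) : (Vec n × Vec n) →ₗ[ℝ] (Vec n × Vec n) →ₗ[ℝ] ℝ :=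
  formL (lagForm D.f D.ψ w.1.x w.1.κ) (D.scale w) (D.cross w)

theorem scale_of_biactive {i : Fin n} (hi : D.kind i = .biactive) (w : State n K × ℝ) :
    D.scale w i = w.2 := if_pos hi

theorem scale_of_ne {i : Fin n} (hi : D.kind i ≠ .biactive) (w : State n K × ℝ) :
    D.scale w i = 1 := if_neg hi

theorem continuousAt_scale : ContinuousAt D.scale (D.base, 0) := by
  refine continuousAt_pi.2 fun i => ?_
  by_cases hi : D.kind i = .biactive
  · simp only [D.scale_of_biactive hi]
    fun_prop
  · simp only [D.scale_of_ne hi]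
    fun_prop

theorem continuousAt_ratio {i : Fin n} (hi : D.kind i = .biactive) :
    ContinuousAt (fun w : State n K × ℝ => D.ratio i w.1) (D.base, 0) :=
  (D.contDiffAt_ratio hi).continuousAt

theorem continuousAt_cross : ContinuousAt D.cross (D.base, 0) := by
  refine continuousAt_pi.2 fun i => ?_
  cases hi : D.kind i <;> simp only [cross, hi]
  case upper => exact D.continuousAt_div_y_of_upper hi (by fun_prop)
  case free => exact .div (by fun_prop) (by fun_prop) (D.free i hi).2.1.ne'
  case zero => fun_prop
  case hyper => exact .div (by fun_prop) (by fun_prop) (D.x_ne_zero_of_hyper hi)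
  case biactive => exact .div (by fun_prop) (D.continuousAt_ratio hi) (D.ratio_base_pos hi).ne'

theorem continuousAt_coef (i : Fin n) : ContinuousAt (fun w => D.coef w i) (D.base, 0) := by
  cases hi : D.kind i <;> simp only [coef, hi]
  case biactive =>
    have ratio := D.continuousAt_ratio hi
    exact ratio.prodMk (continuousAt_const.mul (ratio.inv₀ (D.ratio_base_pos hi).ne')).neg
  all_goals fun_prop

theorem continuousAt_rowFst (r : D.Row) : ContinuousAt (fun w => D.rowFst w r) (D.base, 0) := by
  rcases r with k | i | i | _
  · have grad_x : Continuous fun w : State n K × ℝ => grad (D.ψ k) w.1.x :=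
      (contDiff_grad (D.contDiff_ψ k)).continuous.comp (by fun_prop)
    exact grad_x.continuousAt.mul D.continuousAt_scale
  · exact (continuous_single i).continuousAt.comp (D.continuousAt_coef i).fst
  · exact Continuous.continuousAt ((continuous_single i.1).comp (by fun_prop))
  · exact continuousAt_const

theorem continuousAt_rowSnd (r : D.Row) : ContinuousAt (fun w => D.rowSnd w r) (D.base, 0) := by
  rcases r with _ | i | i | _
  · exact continuousAt_const
  · exact (continuous_single i).continuousAt.comp (D.continuousAt_coef i).snd
  · exact Continuous.continuousAt ((continuous_single i.1).comp (by fun_prop))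
  · exact D.continuousAt_scale

theorem tendsto_row (r : D.Row) (ξ : Vec n × Vec n) :
    Tendsto (fun w => D.row w r ξ) D.near (𝓝 (D.row (D.base, 0) r ξ)) := by
  simp only [row, dotPair_apply, dot]
  have fst := tendsto_pi_nhds.1 (D.tendsto_near (D.continuousAt_rowFst r))
  have snd := tendsto_pi_nhds.1 (D.tendsto_near (D.continuousAt_rowSnd r))
  exact (tendsto_finsetSum _ fun i _ => (fst i).mul_const (ξ.1 i)).add
    (tendsto_finsetSum _ fun i _ => (snd i).mul_const (ξ.2 i))

theorem tendsto_form {ξ ζ : State n K × ℝ → Vec n × Vec n} {ξ₀ ζ₀ : Vec n × Vec n}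
    (hξ : Tendsto ξ D.near (𝓝 ξ₀)) (hζ : Tendsto ζ D.near (𝓝 ζ₀)) :
    Tendsto (fun w => D.form w (ξ w) (ζ w)) D.near (𝓝 (D.form (D.base, 0) ξ₀ ζ₀)) := by
  have scale := D.tendsto_near D.continuousAt_scale
  have cross := tendsto_pi_nhds.1 (D.tendsto_near D.continuousAt_cross)
  have x := D.tendsto_near (p := fun w => w.1.x) (by fun_prop)
  have κ := D.tendsto_near (p := fun w => w.1.κ) (by fun_prop)
  have ξ_apply := tendsto_pi_nhds.1 hξ.fst_nhds
  have ξ_apply' := tendsto_pi_nhds.1 hξ.snd_nhds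
  have ζ_apply := tendsto_pi_nhds.1 hζ.fst_nhds
  have ζ_apply' := tendsto_pi_nhds.1 hζ.snd_nhds
  exact (tendsto_lagForm D.contDiff_f D.contDiff_ψ x κ (scale.mul hξ.fst_nhds)
    (scale.mul hζ.fst_nhds)).sub (tendsto_finsetSum _ fun i _ =>
      (cross i).mul (((ξ_apply i).mul (ζ_apply' i)).add ((ζ_apply i).mul (ξ_apply' i))))

/-! ### Independence of the limiting constraints -/

/-- Extension by zero of the coefficients of the second constraints of the pairs of upper kind. -/
def extUpper (a : D.Row → ℝ) (i : Fin n) : ℝ :=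
  if h : D.kind i = .upper then a (.inr (.inr (.inl ⟨i, h⟩))) else 0

theorem extUpper_of_ne (a : D.Row → ℝ) {i : Fin n} (hi : D.kind i ≠ .upper) :
    D.extUpper a i = 0 := dif_neg hi

theorem extUpper_of_upper (a : D.Row → ℝ) {i : Fin n} (hi : D.kind i = .upper) :
    D.extUpper a i = a (.inr (.inr (.inl ⟨i, hi⟩))) := dif_pos hi

theorem sum_mul_single_eq_extUpper (a : D.Row → ℝ) (p : Vec n) (i : Fin n) :
    ∑ j : {j // D.kind j = .upper},
      a (.inr (.inr (.inl j))) * (Pi.single j.1 (p j.1) : Vec n) i = D.extUpper a i * p i := by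
  by_cases hi : D.kind i = .upper
  · rw [D.extUpper_of_upper a hi, Finset.sum_eq_single_of_mem ⟨i, hi⟩ (Finset.mem_univ _),
      Pi.single_eq_same]
    intro j _ hj
    rw [Pi.single_eq_of_ne fun h => hj (Subtype.ext h.symm), mul_zero]
  · rw [D.extUpper_of_ne a hi, zero_mul]
    refine Finset.sum_eq_zero fun j _ => ?_
    rw [Pi.single_eq_of_ne (ne_of_apply_ne D.kind fun h => hi (h.trans j.2)), mul_zero]

theorem sum_smul_row_eq_zero_iff {w : State n K × ℝ} {a : D.Row → ℝ} :
    ∑ r, a r • D.row w r = 0 ↔ ∀ i,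
      (∑ k, a (.inl k) * grad (D.ψ k) w.1.x i) * D.scale w i
        + a (.inr (.inl i)) * (D.coef w i).1 + D.extUpper a i * w.1.y i = 0 ∧
      a (.inr (.inl i)) * (D.coef w i).2 + D.extUpper a i * w.1.x i
        + a (.inr (.inr (.inr ()))) * D.scale w i = 0 := by
  have fst (i : Fin n) : (∑ r, a r • D.rowFst w r) i
      = (∑ k, a (.inl k) * grad (D.ψ k) w.1.x i) * D.scale w i
        + a (.inr (.inl i)) * (D.coef w i).1 + D.extUpper a i * w.1.y i := by
    simp only [Fintype.sum_sum_type, rowFst, Finset.sum_apply, Pi.smul_apply,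
      smul_eq_mul, D.sum_mul_single_eq_extUpper a w.1.y]
    simp [Pi.single_apply, Finset.sum_mul, mul_assoc, add_assoc]
  have snd (i : Fin n) : (∑ r, a r • D.rowSnd w r) i
      = a (.inr (.inl i)) * (D.coef w i).2 + D.extUpper a i * w.1.x i
        + a (.inr (.inr (.inr ()))) * D.scale w i := by
    simp only [Fintype.sum_sum_type, rowSnd, Finset.sum_apply, Pi.smul_apply,
      smul_eq_mul, D.sum_mul_single_eq_extUpper a w.1.x]
    simp [Pi.single_apply, add_assoc]
  simp only [row, sum_smul_dotPair, dotPair_eq_zero_iff, funext_iff, fst, snd, Pi.zero_apply,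
    forall_and]

theorem linearIndependent_row_base : LinearIndependent ℝ (D.row (D.base, 0)) := by
  refine Fintype.linearIndependent_iff.2 fun a ha => ?_
  rw [sum_smul_row_eq_zero_iff, forall_and] at ha
  obtain ⟨fst, snd⟩ := ha
  have free := (D.free_iff D.i₀).2 rfl
  have card_coeff : a (.inr (.inr (.inr ()))) = 0 := by
    simpa [coef, free, extUpper, (D.free _ free).1, scale] using snd D.i₀
  have pair_coeff {i : Fin n} (hi : D.kind i ≠ .free) : a (.inr (.inl i)) = 0 := by
    have eq := snd i
    rw [card_coeff, zero_mul, add_zero] at eq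
    cases hk : D.kind i
    case upper => simpa [coef, hk, (D.upper i hk).1] using eq
    case free => exact absurd hk hi
    case zero => simpa [coef, hk, extUpper] using eq
    case hyper => simpa [coef, hk, extUpper, D.x_ne_zero_of_hyper hk] using eq
    case biactive =>
      simpa [coef, hk, extUpper, D.sign_ne_zero, (D.ratio_base_pos hk).ne'] using eq
  have support (i : Fin n) (hx : D.x i ≠ 0) :
      -∑ k, a (.inl k) * grad (D.ψ k) D.x i = 0 := by
    have eq := fst i
    cases hi : D.kind i
    case upper => exact absurd (D.upper i hi).1 hx
    case free => exact absurd (D.free i hi).1 hx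
    case biactive => exact absurd (D.biactive i hi).1 hx
    case zero => simpa [coef, hi, extUpper, scale] using eq
    case hyper => simpa [coef, hi, extUpper, scale, (D.hyper i hi).2.1] using eq
  have grad_coeff (k : K) : a (.inl k) = 0 := congrFun (D.licq (fun k => a (.inl k)) _ support
    fun i => add_neg_cancel _).1 k
  simp only [grad_coeff, zero_mul, Finset.sum_const_zero, zero_add] at fst
  rintro (k | i | ⟨i, hi⟩ | _)
  · exact grad_coeff k
  · by_cases hi : D.kind i = .free
    · simpa [hi, coef, extUpper, (D.free i hi).2.1.ne'] using fst i
    · exact pair_coeff hi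
  · simpa [hi, coef, extUpper, (D.upper i hi).2.1, D.u_pos.ne'] using fst i
  · exact card_coeff

/-! ### The limiting kernel frame -/

/-- Tangent space in `x` of the unperturbed problem. -/
def tangent₀ : Submodule ℝ (Vec n) :=
  LinearMap.ker (LinearMap.pi fun k => (dotL (grad (D.ψ k) D.x) : Vec n →ₗ[ℝ] ℝ)) ⊓
    Submodule.pi {i | D.x i = 0} fun _ => ⊥

variable {D} in
theorem mem_tangent₀ {v : Vec n} : v ∈ D.tangent₀ ↔
    (∀ k, dot (grad (D.ψ k) D.x) v = 0) ∧ ∀ i, D.x i = 0 → v i = 0 := by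
  simp [tangent₀, funext_iff, dotL_apply, Submodule.mem_pi]

/-- Hessian in `x` of the Lagrangian of the unperturbed problem. -/
def hess₀ : Vec n →ₗ[ℝ] Vec n →ₗ[ℝ] ℝ := (lagForm D.f D.ψ D.x D.κ).toLinearMap₁₂

theorem hess₀_symm (u v : Vec n) : D.hess₀ u v = D.hess₀ v u :=
  lagForm_symm D.contDiff_f D.contDiff_ψ _ _ _ _

/-- An orthogonal basis of the unperturbed tangent space with respect to the unperturbed Hessian. -/
structure IsOrthogonalBasis {N : ℕ} (u : Fin N → Vec n) : Prop where
  span_eq : Submodule.span ℝ (Set.range u) = D.tangent₀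
  apply_eq_zero : ∀ j k, j ≠ k → D.hess₀ (u j) (u k) = 0
  apply_self_ne_zero : ∀ j, D.hess₀ (u j) (u j) ≠ 0

variable {D} in
theorem IsOrthogonalBasis.mem {N : ℕ} {u : Fin N → Vec n} (hu : D.IsOrthogonalBasis u)
    (j : Fin N) : u j ∈ D.tangent₀ :=
  hu.span_eq ▸ Submodule.subset_span ⟨j, rfl⟩

theorem exists_isOrthogonalBasis : ∃ (N : ℕ) (u : Fin N → Vec n), D.IsOrthogonalBasis u := by
  obtain ⟨u, span_eq, apply_eq_zero, apply_self_ne_zero⟩ :=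
    exists_orthogonal_family D.hess₀ D.hess₀_symm D.tangent₀ fun v hv h =>
      D.nondeg v (mem_tangent₀.1 hv).1 (mem_tangent₀.1 hv).2 fun v' h₁ h₂ =>
        h v' (mem_tangent₀.2 ⟨h₁, h₂⟩)
  exact ⟨_, u, span_eq, apply_eq_zero, apply_self_ne_zero⟩

variable {N : ℕ} (u : Fin N → Vec n)

/-- Limit of a basis of the rescaled tangent space. -/
def frame : Fin N ⊕ {i // D.kind i = .biactive} → Vec n × Vec n
  | .inl j => (u j, 0)
  | .inr i => (Pi.single i.1 (D.s i * (D.ratio i D.base)⁻¹), Pi.single i.1 (D.ratio i D.base))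

/-- Diagonal of the Gram matrix of `frame`. -/
def diag : Fin N ⊕ {i // D.kind i = .biactive} → ℝ
  | .inl j => D.hess₀ (u j) (u j)
  | .inr i => -(2 * (D.s i * D.σ i / D.ratio i D.base))

theorem diag_inr_neg (i : {i // D.kind i = .biactive}) : D.diag u (.inr i) < 0 :=
  neg_lt_zero.2 (mul_pos two_pos
    (div_pos (D.biactive i.1 i.2).2.2.1 (D.ratio_base_pos i.2)))

theorem scale_base_mul {v : Vec n} (hv : ∀ i, D.kind i = .biactive → v i = 0) :
    D.scale (D.base, 0) * v = v := funext fun i => by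
  by_cases hi : D.kind i = .biactive
  · rw [Pi.mul_apply, hv i hi, mul_zero]
  · rw [Pi.mul_apply, D.scale_of_ne hi, one_mul]

theorem scale_base_mul_of_mem {v : Vec n} (hv : v ∈ D.tangent₀) :
    D.scale (D.base, 0) * v = v :=
  D.scale_base_mul fun i hi => (mem_tangent₀.1 hv).2 i (D.biactive i hi).1

theorem scale_base_mul_single {i : Fin n} (hi : D.kind i = .biactive) (r : ℝ) :
    D.scale (D.base, 0) * Pi.single i r = 0 := funext fun j => by
  by_cases hj : j = i
  · rw [Pi.mul_apply, hj, D.scale_of_biactive hi, zero_mul, Pi.zero_apply]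
  · rw [Pi.mul_apply, Pi.single_eq_of_ne hj, mul_zero, Pi.zero_apply]

theorem form_base_frame_inl {j : Fin N} (hu : u j ∈ D.tangent₀) {ξ : Vec n × Vec n}
    (hξ : ∀ i, D.x i ≠ 0 → ξ.2 i = 0) :
    D.form (D.base, 0) (D.frame u (.inl j)) ξ = D.hess₀ (u j) (D.scale (D.base, 0) * ξ.1) := by
  rw [form, formL_apply, frame, D.scale_base_mul_of_mem hu, Finset.sum_eq_zero, sub_zero]
  · rfl
  · intro i _
    by_cases hx : D.x i = 0
    · simp [(mem_tangent₀.1 hu).2 i hx]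
    · simp [hξ i hx]

theorem form_base_frame_inr (i : {i // D.kind i = .biactive}) (ξ : Vec n × Vec n) :
    D.form (D.base, 0) (D.frame u (.inr i)) ξ
      = -(D.σ i / D.ratio i D.base * (D.s i * (D.ratio i D.base)⁻¹ * ξ.2 i
        + ξ.1 i * D.ratio i D.base)) := by
  rw [form, formL_apply, frame, D.scale_base_mul_single i.2, map_zero, _root_.zero_apply, zero_sub,
    Finset.sum_eq_single_of_mem i.1 (Finset.mem_univ _) fun j _ hj => by simp [hj]]
  simp [cross, i.2]

theorem form_base_frame_self (hu : D.IsOrthogonalBasis u)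
    (j : Fin N ⊕ {i // D.kind i = .biactive}) :
    D.form (D.base, 0) (D.frame u j) (D.frame u j) = D.diag u j := by
  rcases j with j | i
  · rw [D.form_base_frame_inl u (hu.mem j) fun _ _ => rfl, frame,
      D.scale_base_mul_of_mem (hu.mem j), diag]
  · have ratio_ne := (D.ratio_base_pos i.2).ne'
    rw [form_base_frame_inr]
    simp only [frame, Pi.single_eq_same, diag]
    field_simp
    ring

theorem form_base_frame_of_ne (hu : D.IsOrthogonalBasis u)
    {j k : Fin N ⊕ {i // D.kind i = .biactive}} (hjk : j ≠ k) :
    D.form (D.base, 0) (D.frame u j) (D.frame u k) = 0 := by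
  rcases j with j | i <;> rcases k with k | i'
  · rw [D.form_base_frame_inl u (hu.mem j) fun _ _ => rfl, frame,
      D.scale_base_mul_of_mem (hu.mem k)]
    exact hu.apply_eq_zero j k (ne_of_apply_ne Sum.inl hjk)
  · rw [D.form_base_frame_inl u (hu.mem j), frame, D.scale_base_mul_single i'.2, map_zero]
    intro i hx
    exact Pi.single_eq_of_ne (fun h : i = i'.1 => hx (by rw [h]; exact (D.biactive _ i'.2).1)) _
  · have u_apply : u k i.1 = 0 := (mem_tangent₀.1 (hu.mem k)).2 i (D.biactive _ i.2).1
    rw [form_base_frame_inr]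
    simp [frame, u_apply]
  · have ne : i.1 ≠ i'.1 := fun h => hjk (congrArg Sum.inr (Subtype.ext h))
    rw [form_base_frame_inr]
    simp [frame, ne]

theorem row_base_frame_inl {j : Fin N} (hu : u j ∈ D.tangent₀) (r : D.Row) :
    D.row (D.base, 0) r (D.frame u (.inl j)) = 0 := by
  obtain ⟨grad_eq, u_apply⟩ := mem_tangent₀.1 hu
  rw [row, dotPair_apply, frame, dot_zero_right, add_zero]
  rcases r with k | i | i | _
  · rw [rowFst, dot_mul, D.scale_base_mul_of_mem hu]
    exact grad_eq k
  · rw [rowFst, dot_single]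
    cases hi : D.kind i
    case upper => simp [coef, hi]
    case free => exact mul_eq_zero_of_right _ (u_apply i (D.free i hi).1)
    case zero => simp [coef, hi]
    case hyper => simp [coef, hi, (D.hyper i hi).2.1]
    case biactive => exact mul_eq_zero_of_right _ (u_apply i (D.biactive i hi).1)
  · rw [rowFst, dot_single]
    exact mul_eq_zero_of_right _ (u_apply i (D.upper i.1 i.2).1)
  · exact dot_zero_left _

theorem row_base_frame_inr (i : {i // D.kind i = .biactive}) (r : D.Row) :
    D.row (D.base, 0) r (D.frame u (.inr i)) = 0 := by
  rw [row, dotPair_apply, frame]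
  rcases r with k | j | j | _
  · rw [rowFst, rowSnd, dot_mul, D.scale_base_mul_single i.2, dot_zero_left, dot_zero_right,
      add_zero]
  · rw [rowFst, rowSnd, dot_single, dot_single]
    by_cases h : j = i.1
    · have ratio_ne := (D.ratio_base_pos i.2).ne'
      simp only [h, coef, i.2, Pi.single_eq_same]
      field_simp
      ring
    · simp [h]
  · have ne : j.1 ≠ i.1 := ne_of_apply_ne D.kind (by simp [j.2, i.2])
    simp [rowFst, rowSnd, dot_single, ne]
  · rw [rowFst, rowSnd, dot_zero_left, dot_single_right, D.scale_of_biactive i.2, zero_mul,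
      add_zero]

section Complete

variable {D u} {ξ : Vec n × Vec n} (hrow : ∀ r, D.row (D.base, 0) r ξ = 0)

include hrow

theorem pair_of_row_base (i : Fin n) :
    (D.coef (D.base, 0) i).1 * ξ.1 i + (D.coef (D.base, 0) i).2 * ξ.2 i = 0 := by
  simpa only [row, rowFst, rowSnd, dotPair_apply, dot_single] using hrow (.inr (.inl i))

theorem biactive_of_row_base {i : Fin n} (hi : D.kind i = .biactive)
    (hform : D.form (D.base, 0) (D.frame u (.inr ⟨i, hi⟩)) ξ = 0) : ξ.1 i = 0 ∧ ξ.2 i = 0 := by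
  have ratio_ne := (D.ratio_base_pos hi).ne'
  have σ_ne : D.σ i ≠ 0 := fun h => by simpa [h] using (D.biactive i hi).2.2.1
  have difference := pair_of_row_base hrow i
  simp only [coef, hi] at difference
  rw [form_base_frame_inr, neg_eq_zero] at hform
  have sum := (mul_eq_zero.1 hform).resolve_left (div_ne_zero σ_ne ratio_ne)
  have fst : D.ratio i D.base * ξ.1 i = 0 := by linear_combination (difference + sum) / 2
  have snd : D.s i * (D.ratio i D.base)⁻¹ * ξ.2 i = 0 := by
    linear_combination (sum - difference) / 2
  exact ⟨(mul_eq_zero.1 fst).resolve_left ratio_ne, (mul_eq_zero.1 snd).resolve_left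
    (mul_ne_zero (D.sign_ne_zero i) (inv_ne_zero ratio_ne))⟩

theorem fst_of_row_base (hbi : ∀ i, D.kind i = .biactive → ξ.1 i = 0) {i : Fin n}
    (hx : D.x i = 0) : ξ.1 i = 0 := by
  cases hi : D.kind i
  case zero => exact absurd hx (D.zero i hi).1
  case hyper => exact absurd hx (D.x_ne_zero_of_hyper hi)
  case biactive => exact hbi i hi
  case free => simpa [coef, hi, hx, (D.free i hi).2.1.ne'] using pair_of_row_base hrow i
  case upper =>
    simpa [row, rowFst, rowSnd, dotPair_apply, dot_single, dot_zero_left, hx, (D.upper i hi).2.1,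
      D.u_pos.ne'] using hrow (.inr (.inr (.inl ⟨i, hi⟩)))

theorem snd_of_row_base (hbi : ∀ i, D.kind i = .biactive → ξ.2 i = 0) : ξ.2 = 0 := by
  have snd_apply {i : Fin n} (ne : i ≠ D.i₀) : ξ.2 i = 0 := by
    have pair := pair_of_row_base hrow i
    cases hi : D.kind i
    case free => exact absurd ((D.free_iff i).1 hi) ne
    case biactive => exact hbi i hi
    case upper => simpa [coef, hi] using pair
    case zero => simpa [coef, hi] using pair
    case hyper => simpa [coef, hi, (D.hyper i hi).2.1, D.x_ne_zero_of_hyper hi] using pair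
  funext i
  by_cases hi : i = D.i₀
  · have sum := hrow (.inr (.inr (.inr ())))
    rw [row, dotPair_apply, rowFst, rowSnd, dot_zero_left, zero_add, dot,
      Finset.sum_eq_single_of_mem D.i₀ (Finset.mem_univ _) fun j _ hj => by
        rw [snd_apply hj, mul_zero],
      D.scale_of_ne (by simp [(D.free_iff D.i₀).2 rfl]), one_mul] at sum
    exact hi ▸ sum
  · exact snd_apply hi

theorem eq_zero_of_row_base (hu : D.IsOrthogonalBasis u)
    (hform : ∀ j, D.form (D.base, 0) (D.frame u j) ξ = 0) : ξ = 0 := by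
  have biactive {i : Fin n} (hi : D.kind i = .biactive) := biactive_of_row_base hrow hi (hform _)
  have snd : ξ.2 = 0 := snd_of_row_base hrow fun i hi => (biactive hi).2
  have scale_mul : D.scale (D.base, 0) * ξ.1 = ξ.1 := D.scale_base_mul fun i hi => (biactive hi).1
  have grad_eq (k : K) : dot (grad (D.ψ k) D.x) ξ.1 = 0 := by
    have eq := hrow (.inl k)
    rwa [row, dotPair_apply, rowFst, rowSnd, dot_zero_left, add_zero, dot_mul, scale_mul] at eq
  have fst : ξ.1 = 0 := by
    refine D.nondeg ξ.1 grad_eq (fun i => fst_of_row_base hrow fun i hi => (biactive hi).1)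
      fun v h₁ h₂ => ?_
    have v_mem : v ∈ Submodule.span ℝ (Set.range u) := hu.span_eq ▸ mem_tangent₀.2 ⟨h₁, h₂⟩
    refine (Submodule.span_le (p := (D.hess₀ ξ.1).ker)).2 ?_ v_mem
    rintro _ ⟨j, rfl⟩
    rw [SetLike.mem_coe, LinearMap.mem_ker, D.hess₀_symm, ← hform (.inl j),
      D.form_base_frame_inl u (hu.mem j) fun i _ => congrFun snd i, scale_mul]
  exact Prod.ext fst snd

end Complete

theorem isKernelFrame (hu : D.IsOrthogonalBasis u) :
    IsKernelFrame (D.row (D.base, 0)) (D.form (D.base, 0)) (D.frame u) (D.diag u) where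
  independent := D.linearIndependent_row_base
  apply_eq_zero
    | .inl j => D.row_base_frame_inl u (hu.mem j)
    | .inr i => D.row_base_frame_inr u i
  gram j k := by
    split_ifs with h
    · rw [← h, D.form_base_frame_self u hu]
    · exact D.form_base_frame_of_ne u hu h
  ne_zero
    | .inl j => hu.apply_self_ne_zero j
    | .inr i => (D.diag_inr_neg u i).ne
  complete _ hrow hform := eq_zero_of_row_base hrow hu hform

/-! ### Nondegeneracy of the solutions -/

/-- Tangent space of `S(t)` at a solution of the system. -/
def tangent (w : State n K × ℝ) (ξ : Vec n × Vec n) : Prop :=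
  (∀ k, dot (grad (D.ψ k) w.1.x) ξ.1 = 0) ∧
  (∀ i, D.kind i = .upper ∨ D.kind i = .zero → ξ.2 i = 0) ∧
  ∑ i, ξ.2 i = 0 ∧
  ∀ i, D.kind i ≠ .zero → w.1.y i * ξ.1 i + w.1.x i * ξ.2 i = 0

/-- Signed multipliers of the constraints `|x i * y i| ≤ t` of `S(t)`. -/
def eta (w : State n K × ℝ) : Vec n := fun i =>
  if D.kind i = .zero then 0 else w.1.σ i / w.1.y i

/-- Hessian of the Lagrangian of `S(t)` at a solution of the system. -/
def hessReg (w : State n K × ℝ) : (Vec n × Vec n) →ₗ[ℝ] (Vec n × Vec n) →ₗ[ℝ] ℝ :=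
  formL (lagForm D.f D.ψ w.1.x w.1.κ) 1 (D.eta w)

theorem hessReg_apply (w : State n K × ℝ) (ξ ζ : Vec n × Vec n) :
    D.hessReg w ξ ζ = lagForm D.f D.ψ w.1.x w.1.κ ξ.1 ζ.1
      - ∑ i, D.eta w i * (ξ.1 i * ζ.2 i + ζ.1 i * ξ.2 i) := by
  rw [hessReg, formL_apply, one_mul, one_mul]

/-- Linear independence of the gradients of the active constraints of `S(t)`: `lam`, `ν`, `m`, `e`
are the coefficients of the smooth constraints, the bounds on `y`, the cardinality constraint and
the constraints `|x i * y i| ≤ t`. -/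
def Licq (w : State n K × ℝ) : Prop := ∀ (lam : K → ℝ) (ν : Vec n) (m : ℝ) (e : Vec n),
  (∀ i, D.kind i ≠ .upper → D.kind i ≠ .zero → ν i = 0) →
  (∀ i, D.kind i = .zero → e i = 0) →
  (∀ i, ∑ k, lam k * grad (D.ψ k) w.1.x i + e i * w.1.y i = 0) →
  (∀ i, ν i + m + e i * w.1.x i = 0) → lam = 0 ∧ ν = 0 ∧ m = 0 ∧ e = 0

/-- A solution of the system whose associated point of `S(t)` satisfies the linear independence and
second-order nondegeneracy conditions, each biactive pair adding one to the quadratic index. -/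
structure IsNondegenerate (w : State n K × ℝ) : Prop extends D.IsRegular w where
  licq : D.Licq w
  hess_nondeg : ∀ ξ, D.tangent w ξ → (∀ ζ, D.tangent w ζ → D.hessReg w ξ ζ = 0) → ξ = 0
  negIndex_eq : negIndex (fun ξ ζ => D.hessReg w ξ ζ) (D.tangent w)
    = negIndex (fun ξ ζ => D.hess₀ ξ.1 ζ.1) (fun ξ => ξ.1 ∈ D.tangent₀ ∧ ξ.2 = 0)
      + Fintype.card {i // D.kind i = .biactive}

namespace IsRegular

variable {D} {w : State n K × ℝ} (h : D.IsRegular w)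

include h

theorem cross_eq : D.cross w = D.eta w * D.scale w ^ 2 := by
  funext i
  cases hi : D.kind i
  case biactive =>
    have ratio_ne := (h.ratio_pos hi).ne'
    have θ_ne := h.pos.ne'
    simp only [cross, eta, scale, hi, Pi.mul_apply, Pi.pow_apply, h.y_eq_of_biactive hi, if_true,
      reduceCtorEq, if_false]
    field_simp
  case hyper =>
    have eq : (D.c i - w.1.μ) / w.1.x i = w.1.σ i / w.1.y i := by
      rw [div_eq_div_iff (h.x_ne_zero hi) (h.y_pos (by simp [hi])).ne',
        h.mult_eq (by simp [hi]) (by simp [hi])]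
    simp [cross, eta, scale, hi, eq]
  all_goals simp [cross, eta, scale, hi]

theorem form_eq (ξ ζ : Vec n × Vec n) :
    D.form w ξ ζ = D.hessReg w (scaleL (D.scale w) ξ) (scaleL (D.scale w) ζ) := by
  rw [hessReg, formL_scaleL, ← h.cross_eq, form]

theorem scale_ne_zero (i : Fin n) : D.scale w i ≠ 0 := by
  by_cases hi : D.kind i = .biactive
  · exact D.scale_of_biactive hi w ▸ h.pos.ne'
  · exact D.scale_of_ne hi w ▸ one_ne_zero

theorem coef_eq {i : Fin n} (h₁ : D.kind i ≠ .upper) (h₂ : D.kind i ≠ .zero) :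
    w.1.y i * D.scale w i = D.scale w i ^ 3 * (D.coef w i).1 ∧
      w.1.x i * D.scale w i = D.scale w i ^ 3 * (D.coef w i).2 := by
  cases hi : D.kind i
  case upper => exact absurd hi h₁
  case zero => exact absurd hi h₂
  case free => simp [scale, coef, hi]
  case hyper => simp [scale, coef, hi]
  case biactive =>
    simp only [D.scale_of_biactive hi, coef, hi]
    constructor
    · rw [h.y_eq_of_biactive hi]
      ring
    · rw [h.x_eq_of_biactive hi]
      ring

theorem product_scaleL_iff {i : Fin n} (h₁ : D.kind i ≠ .upper) (h₂ : D.kind i ≠ .zero)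
    (ξ : Vec n × Vec n) :
    w.1.y i * (D.scale w * ξ.1) i + w.1.x i * (D.scale w * ξ.2) i = 0 ↔
      (D.coef w i).1 * ξ.1 i + (D.coef w i).2 * ξ.2 i = 0 := by
  obtain ⟨fst, snd⟩ := h.coef_eq h₁ h₂
  have factor : w.1.y i * (D.scale w * ξ.1) i + w.1.x i * (D.scale w * ξ.2) i
      = D.scale w i ^ 3 * ((D.coef w i).1 * ξ.1 i + (D.coef w i).2 * ξ.2 i) := by
    simp only [Pi.mul_apply]
    linear_combination ξ.1 i * fst + ξ.2 i * snd
  rw [factor, mul_eq_zero, or_iff_right (pow_ne_zero 3 (h.scale_ne_zero i))]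

omit h in
theorem forall_row_eq_zero_iff {ξ : Vec n × Vec n} : (∀ r, D.row w r ξ = 0) ↔
    (∀ k, dot (grad (D.ψ k) w.1.x) (D.scale w * ξ.1) = 0) ∧
    (∀ i, (D.coef w i).1 * ξ.1 i + (D.coef w i).2 * ξ.2 i = 0) ∧
    (∀ i, D.kind i = .upper → w.1.y i * ξ.1 i + w.1.x i * ξ.2 i = 0) ∧
    dot (D.scale w) ξ.2 = 0 := by
  simp only [Sum.forall, row, rowFst, rowSnd, dotPair_apply, dot_single, dot_zero_left, dot_mul,
    add_zero, zero_add, Subtype.forall, forall_const]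

theorem tangent_scaleL_iff (ξ : Vec n × Vec n) :
    D.tangent w (scaleL (D.scale w) ξ) ↔ ∀ r, D.row w r ξ = 0 := by
  have scale_upper {i : Fin n} (hi : D.kind i = .upper) : D.scale w i = 1 :=
    D.scale_of_ne (by simp [hi]) w
  have bound_iff {i : Fin n} (hi : D.kind i = .upper ∨ D.kind i = .zero) :
      (D.scale w * ξ.2) i = 0 ↔ (D.coef w i).1 * ξ.1 i + (D.coef w i).2 * ξ.2 i = 0 := by
    rcases hi with hi | hi <;> simp [scale, coef, hi]
  rw [forall_row_eq_zero_iff, tangent, scaleL_apply]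
  refine and_congr_right fun _ => ⟨fun ⟨bound, sum, product⟩ => ⟨fun i => ?_, fun i hi => ?_, sum⟩,
    fun ⟨pair, upper, sum⟩ => ⟨fun i hi => (bound_iff hi).2 (pair i), sum, fun i hi => ?_⟩⟩
  · by_cases hi : D.kind i = .upper ∨ D.kind i = .zero
    · exact (bound_iff hi).1 (bound i hi)
    · obtain ⟨h₁, h₂⟩ := not_or.1 hi
      exact (h.product_scaleL_iff h₁ h₂ ξ).1 (product i h₂)
  · simpa [scale_upper hi] using product i (by simp [hi])
  · by_cases hi' : D.kind i = .upper
    · simpa [scale_upper hi'] using upper i hi'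
    · exact (h.product_scaleL_iff hi' hi ξ).2 (pair i)

theorem licq (hrow : LinearIndependent ℝ (D.row w)) : D.Licq w := by
  intro lam ν m e hν he h₁ h₂
  let a : D.Row → ℝ
    | .inl k => lam k
    | .inr (.inl i) =>
        if D.kind i = .upper ∨ D.kind i = .zero then ν i else e i * D.scale w i ^ 3
    | .inr (.inr (.inl i)) => e i.1
    | .inr (.inr (.inr _)) => m
  have a_eq : ∀ r, a r = 0 := by
    refine Fintype.linearIndependent_iff.1 hrow a (D.sum_smul_row_eq_zero_iff.2 fun i => ?_)
    have eq₁ := h₁ i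
    have eq₂ := h₂ i
    by_cases hi : D.kind i = .upper ∨ D.kind i = .zero
    · rcases hi with hi | hi
      · simp only [a, extUpper, hi, coef, scale, dif_pos, true_or, if_true, reduceCtorEq, if_false]
        exact ⟨by linear_combination eq₁, by linear_combination eq₂⟩
      · rw [he i hi] at eq₁ eq₂
        simp only [a, extUpper, hi, coef, scale, or_true, if_true, reduceCtorEq, if_false,
          dif_neg, not_false_eq_true]
        exact ⟨by linear_combination eq₁, by linear_combination eq₂⟩
    · obtain ⟨hu, hz⟩ := not_or.1 hi
      obtain ⟨coef₁, coef₂⟩ := h.coef_eq hu hz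
      rw [hν i hu hz] at eq₂
      simp only [a, extUpper, hu, hz, or_self, if_false, dif_neg, not_false_eq_true]
      exact ⟨by linear_combination D.scale w i * eq₁ - e i * coef₁,
        by linear_combination D.scale w i * eq₂ - e i * coef₂⟩
  refine ⟨funext fun k => a_eq (.inl k), funext fun i => ?_, a_eq (.inr (.inr (.inr ()))),
    funext fun i => ?_⟩
  · by_cases hi : D.kind i = .upper ∨ D.kind i = .zero
    · simpa [a, hi] using a_eq (.inr (.inl i))
    · exact hν i (not_or.1 hi).1 (not_or.1 hi).2
  · by_cases hu : D.kind i = .upper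
    · exact a_eq (.inr (.inr (.inl ⟨i, hu⟩)))
    · by_cases hz : D.kind i = .zero
      · exact he i hz
      · simpa [a, hu, hz, h.scale_ne_zero i] using a_eq (.inr (.inl i))

theorem tangent_iff_mem_span {ι : Type*} {β : ι → Vec n × Vec n}
    (hβ : ∀ ξ, (∀ r, D.row w r ξ = 0) ↔ ξ ∈ Submodule.span ℝ (Set.range β)) (ζ : Vec n × Vec n) :
    D.tangent w ζ ↔ ζ ∈ Submodule.span ℝ (Set.range fun j => scaleL (D.scale w) (β j)) := by
  have scaleL_bijective := scaleL_bijective h.scale_ne_zero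
  obtain ⟨ξ, rfl⟩ := scaleL_bijective.2 ζ
  have span_eq : Submodule.span ℝ (Set.range fun j => scaleL (D.scale w) (β j))
      = (Submodule.span ℝ (Set.range β)).map (scaleL (D.scale w)) := by
    rw [Submodule.map_span, ← Set.range_comp]
    rfl
  rw [h.tangent_scaleL_iff, hβ, span_eq]
  exact (scaleL_bijective.1.mem_set_image (s := Submodule.span ℝ (Set.range β))).symm

end IsRegular

theorem negIndex_base {N : ℕ} {u : Fin N → Vec n} (hu : D.IsOrthogonalBasis u) :
    negIndex (fun ξ ζ => D.hess₀ ξ.1 ζ.1) (fun ξ => ξ.1 ∈ D.tangent₀ ∧ ξ.2 = 0)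
      = Fintype.card {j // D.hess₀ (u j) (u j) < 0} := by
  let B : (Vec n × Vec n) →ₗ[ℝ] (Vec n × Vec n) →ₗ[ℝ] ℝ :=
    D.hess₀.compl₁₂ (LinearMap.fst ℝ _ _) (LinearMap.fst ℝ _ _)
  let inl := LinearMap.inl ℝ (Vec n) (Vec n)
  have orthogonal : NearDiag B (fun j => inl (u j)) fun j => D.hess₀ (u j) (u j) :=
    .of_eq hu.apply_self_ne_zero fun j k => by
      by_cases hjk : j = k
      · rw [if_pos hjk, hjk]
        rfl
      · rw [if_neg hjk]
        exact hu.apply_eq_zero j k hjk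
  refine orthogonal.negIndex_eq fun ξ => ?_
  have span_eq : Submodule.span ℝ (Set.range fun j => inl (u j)) = D.tangent₀.map inl := by
    rw [← hu.span_eq, Submodule.map_span, ← Set.range_comp]
    rfl
  rw [span_eq]
  constructor
  · rintro ⟨fst_mem, snd_eq⟩
    exact ⟨ξ.1, fst_mem, Prod.ext rfl snd_eq.symm⟩
  · rintro ⟨v, hv, rfl⟩
    exact ⟨hv, rfl⟩

theorem card_diag_neg {N : ℕ} (u : Fin N → Vec n) :
    Fintype.card {j // D.diag u j < 0} = Fintype.card {j // D.hess₀ (u j) (u j) < 0}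
      + Fintype.card {i // D.kind i = .biactive} := by
  rw [Fintype.card_congr Equiv.subtypeSum, Fintype.card_sum]
  exact congrArg _ (Fintype.card_congr (Equiv.subtypeUnivEquiv (D.diag_inr_neg u)))

theorem eventually_isNondegenerate : ∀ᶠ w in D.near, D.IsNondegenerate w := by
  obtain ⟨N, u, hu⟩ := D.exists_isOrthogonalBasis
  have isKernelFrame := D.isKernelFrame u hu
  obtain ⟨β, tendsto_β, kernel⟩ := isKernelFrame.exists_perturbation D.tendsto_row
  have gram : ∀ᶠ w in D.near, NearDiag (D.form w) (β w) (D.diag u) :=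
    eventually_nearDiag isKernelFrame.ne_zero fun j k => by
      rw [← isKernelFrame.gram]
      exact D.tendsto_form (tendsto_β j) (tendsto_β k)
  filter_upwards [D.eventually_isRegular, kernel, gram] with w regular ⟨independent, kernel⟩ gram
  have span := regular.tangent_iff_mem_span kernel
  have gramReg : NearDiag (D.hessReg w) (fun j => scaleL (D.scale w) (β w j)) (D.diag u) := by
    simpa only [NearDiag, regular.form_eq] using gram
  refine ⟨regular, regular.licq independent, fun ξ hξ hζ => ?_, ?_⟩
  · exact gramReg.eq_zero_of_mem_span ((span ξ).1 hξ) fun k =>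
      hζ _ ((span _).2 (Submodule.subset_span ⟨k, rfl⟩))
  · rw [gramReg.negIndex_eq span, D.negIndex_base hu, D.card_diag_neg]

end LocalData

/-! ### Local data of a nondegenerate T-stationary point -/

theorem sum_smul_ex (S : Finset (Fin n)) (r : Vec n) :
    ∑ i ∈ S, r i • ex i = ((fun i => if i ∈ S then r i else 0 : Vec n), (0 : Vec n)) :=
  Prod.ext (funext fun j => by simp [Prod.fst_sum, ex, Pi.single_apply])
    (by simp [Prod.snd_sum, ex])

theorem sum_smul_ey (S : Finset (Fin n)) (r : Vec n) :
    ∑ i ∈ S, r i • ey i = ((0 : Vec n), (fun i => if i ∈ S then r i else 0 : Vec n)) :=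
  Prod.ext (by simp [Prod.fst_sum, ey])
    (funext fun j => by simp [Prod.snd_sum, ey, Pi.single_apply])

theorem sum_smul_hvec (S : Finset (Fin n)) (r x y : Vec n) :
    ∑ i ∈ S, r i • hvec x y i = ((fun i => (if i ∈ S then r i else 0) * y i : Vec n),
      (fun i => (if i ∈ S then r i else 0) * x i : Vec n)) :=
  Prod.ext (funext fun j => by simp [Prod.fst_sum, hvec, Pi.single_apply])
    (funext fun j => by simp [Prod.snd_sum, hvec, Pi.single_apply])

theorem sum_smul_pair_zero {ι : Type*} (S : Finset ι) (r : ι → ℝ) (v : ι → Vec n) :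
    ∑ k ∈ S, r k • ((v k, (0 : Vec n)) : Vec n × Vec n)
      = ((fun i => ∑ k ∈ S, r k * v k i : Vec n), (0 : Vec n)) :=
  Prod.ext (funext fun j => by simp [Prod.fst_sum]) (by simp [Prod.snd_sum])

theorem sum_mul_eq_dot_ite (S : Finset (Fin n)) (r v : Vec n) :
    ∑ i ∈ S, r i * v i = dot (fun i => if i ∈ S then r i else 0) v := by
  simp [dot, ite_mul]

theorem dot_add_left (a b v : Vec n) : dot (a + b) v = dot a v + dot b v := add_dotProduct a b v

theorem dot_sub_left (a b v : Vec n) : dot (a - b) v = dot a v - dot b v := sub_dotProduct a b v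

theorem dot_neg_left (a v : Vec n) : dot (-a) v = -dot a v := neg_dotProduct a v

theorem dot_const_left (r : ℝ) (v : Vec n) : dot (fun _ => r) v = r * ∑ i, v i :=
  (Finset.mul_sum ..).symm

section ActiveConstraints

variable (D : Setting n P Q) (x : Vec n)

/-- The constraint functions `h p` and those `g q` which are active at `x`. -/
def actFun : P ⊕ {q // q ∈ Q0 D x} → Vec n → ℝ := Sum.elim D.h fun q => D.g q

/-- Multipliers of the constraints `actFun`, obtained by restricting those of all constraints. -/
def actMult (lam : P → ℝ) (mu1 : Q → ℝ) : P ⊕ {q // q ∈ Q0 D x} → ℝ := Sum.elim lam fun q => mu1 q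

/-- Extension by zero to all of `Q` of multipliers of the active inequality constraints. -/
def extMult (κ : P ⊕ {q // q ∈ Q0 D x} → ℝ) (q : Q) : ℝ :=
  if hq : q ∈ Q0 D x then κ (.inr ⟨q, hq⟩) else 0

theorem actMult_extMult (κ : P ⊕ {q // q ∈ Q0 D x} → ℝ) :
    actMult D x (fun p => κ (.inl p)) (extMult D x κ) = κ := by
  funext k
  rcases k with p | q
  · rfl
  · simp [actMult, extMult]

theorem sum_actMult (lam : P → ℝ) (mu1 : Q → ℝ) (F : (Vec n → ℝ) → ℝ) :
    ∑ k, actMult D x lam mu1 k * F (actFun D x k)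
      = ∑ p, lam p * F (D.h p) + ∑ q ∈ Q0 D x, mu1 q * F (D.g q) := by
  rw [Fintype.sum_sum_type, Finset.sum_subtype (Q0 D x) (p := (· ∈ Q0 D x)) (fun _ => Iff.rfl)]
  rfl

theorem contDiff_actFun : ∀ k, ContDiff ℝ 2 (actFun D x k)
  | .inl p => D.hh p
  | .inr q => D.hg q

theorem forall_actFun {p : (Vec n → ℝ) → Prop} :
    (∀ k, p (actFun D x k)) ↔ (∀ i, p (D.h i)) ∧ ∀ q ∈ Q0 D x, p (D.g q) := by
  simp only [Sum.forall, Subtype.forall, actFun, Sum.elim_inl, Sum.elim_inr]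

end ActiveConstraints

section IndexSets

variable {D : Setting n P Q} {x y : Vec n} {i : Fin n}

theorem mem_a01 : i ∈ a01 x y ↔ x i = 0 ∧ 0 < y i := by simp [a01]

theorem mem_a10 : i ∈ a10 x y ↔ x i ≠ 0 ∧ y i = 0 := by simp [a10]

theorem mem_a00 : i ∈ a00 x y ↔ x i = 0 ∧ y i = 0 := by simp [a00]

theorem mem_Q0 {q : Q} : q ∈ Q0 D x ↔ D.g q x = 0 := by simp [Q0]

theorem mem_Eact : i ∈ Eact D y ↔ y i = 1 + D.ε := by simp [Eact]

theorem mem_a10_union_a00 : i ∈ a10 x y ∪ a00 x y ↔ y i = 0 := by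
  rw [Finset.mem_union, mem_a10, mem_a00]
  tauto

theorem one_add_ε_pos (D : Setting n P Q) : 0 < 1 + D.ε := by linarith [D.hεpos]

end IndexSets

section TStationary

variable {D : Setting n P Q} {x y : Vec n} {M : TMult n P Q} {i : Fin n}

/-- The multiplier of `x` at a T-stationary point. -/
def sigma (x y : Vec n) (M : TMult n P Q) : Vec n :=
  (fun i => if i ∈ a01 x y then M.sig1 i else 0) + fun i => if i ∈ a00 x y then M.rho1 i else 0

/-- The kind of the pair `(x i, y i)` at a T-stationary point; if `x i ≠ 0` and `y i = 0`, the sign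
of the multiplier `c i - μ₃` of `y i` decides whether `y i` stays zero under the regularization. -/
def kindOf (D : Setting n P Q) (x y : Vec n) (M : TMult n P Q) (i : Fin n) : Kind :=
  if y i = 1 + D.ε then .upper
  else if 0 < y i then .free
  else if x i = 0 then .biactive
  else if M.mu3 < D.c i then .zero
  else .hyper

/-- The sign which the multiplier of `x i` takes in the regularized problem. -/
def signOf (x y : Vec n) (M : TMult n P Q) (i : Fin n) : ℝ :=
  if x i = 0 then if 0 < sigma x y M i then 1 else -1
  else if 0 < x i then -1 else 1

omit [Fintype P] [Fintype Q] in
theorem signOf_eq_one_or : signOf x y M i = 1 ∨ signOf x y M i = -1 := by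
  unfold signOf
  split_ifs <;> simp

omit [Fintype P] [Fintype Q] in
theorem signOf_mul_neg (hx : x i ≠ 0) : signOf x y M i * x i < 0 := by
  rw [signOf, if_neg hx]
  split_ifs with x_pos
  · linarith
  · linarith [lt_of_le_of_ne (not_lt.1 x_pos) hx]

omit [Fintype P] [Fintype Q] in
theorem sigma_eq_zero (hx : x i ≠ 0) : sigma x y M i = 0 := by
  simp [sigma, mem_a01, mem_a00, hx]

theorem kindOf_eq_upper : kindOf D x y M i = .upper ↔ y i = 1 + D.ε := by
  unfold kindOf
  split_ifs <;> simp_all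

theorem kindOf_eq_free : kindOf D x y M i = .free ↔ y i ≠ 1 + D.ε ∧ 0 < y i := by
  unfold kindOf
  split_ifs <;> simp_all

theorem TStatAt.fst_eq (h : TStatAt D x y M) (i : Fin n) :
    grad D.f x i - ∑ k, actMult D x M.lam M.mu1 k * grad (actFun D x k) x i - sigma x y M i
      = 0 := by
  have stat := congrFun (congrArg Prod.fst h.2.2.2.2.2.2) i
  rw [Finset.sum_add_distrib, sum_smul_ex, sum_smul_ey, sum_smul_ex, sum_smul_ey, sum_smul_ey,
    sum_smul_pair_zero, sum_smul_pair_zero] at stat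
  rw [sum_actMult D x _ _ fun φ => grad φ x i]
  simp only [eAll, Prod.fst_add, Prod.fst_sub, Prod.smul_fst, Pi.add_apply,
    smul_zero, sub_zero, add_zero] at stat
  simp only [sigma, Pi.add_apply]
  linarith

theorem TStatAt.snd_eq (h : TStatAt D x y M) (i : Fin n) :
    D.c i = -(if i ∈ Eact D y then M.mu2 i else 0) + M.mu3
      + (if i ∈ a10 x y then M.sig2 i else 0) + if i ∈ a00 x y then M.rho2 i else 0 := by
  have stat := congrFun (congrArg Prod.snd h.2.2.2.2.2.2) i
  rw [Finset.sum_add_distrib, sum_smul_ex, sum_smul_ey, sum_smul_ex, sum_smul_ey, sum_smul_ey,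
    sum_smul_pair_zero, sum_smul_pair_zero] at stat
  simp only [eAll, Prod.snd_add, Prod.snd_sub, Prod.smul_snd, Pi.add_apply, Pi.sub_apply,
    Pi.zero_apply, Pi.smul_apply, smul_eq_mul, mul_one, add_zero, zero_add] at stat
  linarith

theorem TStatAt.nonneg (h : TStatAt D x y M) (i : Fin n) : 0 ≤ y i := (h.1.2.2.2.2 i).1

theorem TStatAt.x_eq_zero (h : TStatAt D x y M) (hi : 0 < y i) : x i = 0 :=
  (mul_eq_zero.1 (h.1.2.2.2.1 i)).resolve_right hi.ne'

theorem TStatAt.mem_a01_union_a00 (h : TStatAt D x y M) : i ∈ a01 x y ∪ a00 x y ↔ x i = 0 := by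
  rw [Finset.mem_union, mem_a01, mem_a00, ← and_or_left, or_comm, ← le_iff_eq_or_lt']
  exact and_iff_left (h.nonneg i)

theorem TStatAt.y_eq_zero_of_kindOf (h : TStatAt D x y M) (h₁ : kindOf D x y M i ≠ .upper)
    (h₂ : kindOf D x y M i ≠ .free) : y i = 0 := by
  rw [Ne, kindOf_eq_upper] at h₁
  rw [Ne, kindOf_eq_free, not_and] at h₂
  exact le_antisymm (not_lt.1 (h₂ h₁)) (h.nonneg i)

theorem kindOf_of_y_eq_zero (hy : y i = 0) : kindOf D x y M i =
    if x i = 0 then .biactive else if M.mu3 < D.c i then .zero else .hyper := by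
  simp [kindOf, hy, (one_add_ε_pos D).ne]

theorem TStatAt.kindOf_eq_biactive (h : TStatAt D x y M) :
    kindOf D x y M i = .biactive ↔ x i = 0 ∧ y i = 0 := by
  refine ⟨fun hi => ?_, fun ⟨hx, hy⟩ => by rw [kindOf_of_y_eq_zero hy, if_pos hx]⟩
  have hy : y i = 0 := h.y_eq_zero_of_kindOf (by simp [hi]) (by simp [hi])
  rw [kindOf_of_y_eq_zero hy] at hi
  refine ⟨by_contra fun hx => ?_, hy⟩
  rw [if_neg hx] at hi
  split_ifs at hi

theorem TStatAt.of_kindOf_eq_zero (h : TStatAt D x y M) (hi : kindOf D x y M i = .zero) :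
    x i ≠ 0 ∧ y i = 0 ∧ M.mu3 < D.c i := by
  have hy : y i = 0 := h.y_eq_zero_of_kindOf (by simp [hi]) (by simp [hi])
  rw [kindOf_of_y_eq_zero hy] at hi
  split_ifs at hi with hx lt
  exact ⟨hx, hy, lt⟩

theorem TStatAt.of_kindOf_eq_hyper (h : TStatAt D x y M) (hi : kindOf D x y M i = .hyper) :
    x i ≠ 0 ∧ y i = 0 ∧ D.c i ≤ M.mu3 := by
  have hy : y i = 0 := h.y_eq_zero_of_kindOf (by simp [hi]) (by simp [hi])
  rw [kindOf_of_y_eq_zero hy] at hi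
  split_ifs at hi with hx lt
  exact ⟨hx, hy, not_lt.1 lt⟩

theorem TStatAt.eq_of_free (h : TStatAt D x y M) (hi : y i ≠ 1 + D.ε ∧ 0 < y i) :
    D.c i = M.mu3 := by
  simpa [mem_Eact, mem_a10, mem_a00, hi.1, hi.2.ne'] using h.snd_eq i

theorem hess_LagR (ξ ζ : Vec n × Vec n) :
    hess (LagR D x y M) (x, y) ξ ζ
      = lagForm D.f (actFun D x) x (actMult D x M.lam M.mu1) ξ.1 ζ.1 := by
  rw [hess_of_model (contDiff_lag D.hf (contDiff_actFun D x) (actMult D x M.lam M.mu1))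
    (M.mu3 * (n - D.s) - ∑ i ∈ Eact D y, M.mu2 i * (1 + D.ε)) (-sigma x y M)
    (D.c + (fun i => if i ∈ Eact D y then M.mu2 i else 0) - (fun _ => M.mu3)
      - (fun i => if i ∈ a10 x y then M.sig2 i else 0)
      - fun i => if i ∈ a00 x y then M.rho2 i else 0) 0,
    sndDeriv_lag D.hf (contDiff_actFun D x), lagForm_symm D.hf (contDiff_actFun D x)]
  · simp
  · intro z
    simp only [LagR, sigma, Pi.zero_apply, zero_mul, Finset.sum_const_zero, sub_zero, mul_sub,
      Finset.sum_sub_distrib, Finset.sum_add_distrib, sum_mul_eq_dot_ite, dot_add_left,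
      dot_sub_left, dot_neg_left, dot_const_left, sum_actMult D x _ _ fun φ => φ z.1]
    ring

namespace NondegTStatAt

variable (hnd : NondegTStatAt D x y M)
include hnd

theorem lt_of_upper (hi : y i = 1 + D.ε) : D.c i < M.mu3 := by
  obtain ⟨stat, -, -, mu2_pos, -⟩ := hnd
  have y_ne : y i ≠ 0 := hi ▸ (one_add_ε_pos D).ne'
  have snd_eq := stat.snd_eq i
  rw [if_pos (mem_Eact.2 hi), if_neg fun h => y_ne (mem_a10.1 h).2,
    if_neg fun h => y_ne (mem_a00.1 h).2] at snd_eq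
  linarith [mu2_pos i (mem_Eact.2 hi)]

theorem lt_of_biactive (hi : x i = 0 ∧ y i = 0) : D.c i < M.mu3 := by
  obtain ⟨stat, -, -, -, -, rho, -⟩ := hnd
  have snd_eq := stat.snd_eq i
  rw [if_neg fun h => (one_add_ε_pos D).ne (hi.2.symm.trans (mem_Eact.1 h)),
    if_neg fun h => (mem_a10.1 h).1 hi.1, if_pos (mem_a00.2 hi)] at snd_eq
  linarith [(rho i (mem_a00.2 hi)).2]

theorem mu3_pos : 0 < M.mu3 := by
  have sum_pos : ∑ _ : Fin n, (0 : ℝ) < ∑ i, y i := by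
    have s_lt : (D.s : ℝ) < n := by exact_mod_cast D.hs
    rw [Finset.sum_const_zero]
    linarith [hnd.1.1.2.2.1]
  obtain ⟨i, -, y_pos⟩ := Finset.exists_lt_of_sum_lt sum_pos
  by_cases hi : y i = 1 + D.ε
  · exact (D.hcpos i).trans (hnd.lt_of_upper hi)
  · exact hnd.1.eq_of_free ⟨hi, y_pos⟩ ▸ D.hcpos i

theorem sum_eq : ∑ i, y i = (n : ℝ) - D.s :=
  sub_eq_zero.1 ((mul_eq_zero.1 hnd.1.2.2.2.2.1).resolve_left hnd.mu3_pos.ne')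

-- Otherwise `(0, e)` is the sum of the active `(0, e_i)`, against MPOC-LICQ.
theorem exists_free : ∃ i, y i ≠ 1 + D.ε ∧ 0 < y i := by
  by_contra! no_free
  have y_eq : ∀ i, y i ≠ 1 + D.ε → y i = 0 := fun i hi =>
    le_antisymm (no_free i hi) (hnd.1.nonneg i)
  have relation := hnd.2.1 0 0 (fun _ => -1) 1 0 (fun _ => -1) fun h => absurd hnd.sum_eq h
  rw [sum_smul_ey (Eact D y) fun _ => -1, sum_smul_ey (a10 x y ∪ a00 x y) fun _ => -1] at relation
  suffices sum_eq_zero : _ from one_ne_zero (relation sum_eq_zero).2.2.2.1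
  refine Prod.ext (funext fun i => by simp [eAll]) (funext fun i => ?_)
  by_cases hi : y i = 1 + D.ε
  · simp [eAll, mem_Eact, mem_a10, mem_a00, hi, (one_add_ε_pos D).ne']
  · by_cases hx : x i = 0 <;>
      simp [eAll, mem_Eact, mem_a10, mem_a00, y_eq i hi, hx, (one_add_ε_pos D).ne]

theorem free_unique {j : Fin n} (hi : y i ≠ 1 + D.ε ∧ 0 < y i) (hj : y j ≠ 1 + D.ε ∧ 0 < y j) :
    i = j :=
  D.hcinj ((hnd.1.eq_of_free hi).trans (hnd.1.eq_of_free hj).symm)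

theorem c_lt_of_y_eq_zero (hy : y i = 0) (le : D.c i ≤ M.mu3) : D.c i < M.mu3 := by
  obtain ⟨j, hj⟩ := hnd.exists_free
  refine lt_of_le_of_ne le fun eq => hj.2.ne' ?_
  rwa [← D.hcinj (eq.trans (hnd.1.eq_of_free hj).symm)]

theorem sign_mul_sigma_pos (hσ : ∀ i ∈ a01 x y, M.sig1 i ≠ 0) (hx : x i = 0) :
    0 < signOf x y M i * sigma x y M i := by
  have sigma_ne : sigma x y M i ≠ 0 := by
    rcases (hnd.1.nonneg i).eq_or_lt with hy | hy
    · simpa [sigma, mem_a01, mem_a00, hx, ← hy] using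
        (hnd.2.2.2.2.2.1 i (mem_a00.2 ⟨hx, hy.symm⟩)).1
    · simpa [sigma, mem_a01, mem_a00, hx, hy, hy.ne'] using hσ i (mem_a01.2 ⟨hx, hy⟩)
  rw [signOf, if_pos hx]
  split_ifs with sigma_pos
  · rwa [one_mul]
  · rw [neg_one_mul, neg_pos]
    exact lt_of_le_of_ne (not_lt.1 sigma_pos) sigma_ne

theorem licq (lam : P ⊕ {q // q ∈ Q0 D x} → ℝ) (τ : Vec n) (hτ : ∀ i, x i ≠ 0 → τ i = 0)
    (h : ∀ i, ∑ k, lam k * grad (actFun D x k) x i + τ i = 0) : lam = 0 ∧ τ = 0 := by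
  have ite_τ (i : Fin n) : (if i ∈ a01 x y ∪ a00 x y then τ i else 0) = τ i :=
    ite_eq_left_iff.2 fun hi => (hτ i (mt hnd.1.mem_a01_union_a00.2 hi)).symm
  have indep := hnd.2.1 (fun p => lam (.inl p)) (extMult D x lam) 0 0 τ 0 fun _ => rfl
  rw [sum_smul_ex, sum_smul_pair_zero, sum_smul_pair_zero] at indep
  obtain ⟨lam_eq, ext_eq, -, -, τ_eq, -⟩ := indep <| by
    refine Prod.ext (funext fun i => ?_) (by simp)
    have hi := h i
    rw [← actMult_extMult D x lam, sum_actMult D x _ _ fun φ => grad φ x i, ← ite_τ i] at hi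
    simpa using hi
  refine ⟨funext fun k => ?_, funext fun i => ?_⟩
  · rcases k with p | q
    · exact lam_eq p
    · simpa [extMult, q.2] using ext_eq q q.2
  · by_cases hx : x i = 0
    · exact τ_eq i (hnd.1.mem_a01_union_a00.2 hx)
    · exact hτ i hx

theorem snd_eq_zero_of_inTR {ξ : Vec n × Vec n} (hξ : inTR D x y ξ) : ξ.2 = 0 := by
  obtain ⟨-, -, upper, sum, -, zero⟩ := hξ
  obtain ⟨i₀, hi₀⟩ := hnd.exists_free
  have eq_zero (i : Fin n) (hi : i ≠ i₀) : ξ.2 i = 0 := by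
    by_cases hu : y i = 1 + D.ε
    · exact upper i (mem_Eact.2 hu)
    · rcases (hnd.1.nonneg i).eq_or_lt with hy | hy
      · exact zero i (by rwa [Finset.union_comm, mem_a10_union_a00, eq_comm])
      · exact absurd (hnd.free_unique ⟨hu, hy⟩ hi₀) hi
  have sum_eq := sum hnd.sum_eq
  rw [Fintype.sum_eq_single i₀ eq_zero] at sum_eq
  funext i
  by_cases hi : i = i₀
  · exact hi ▸ sum_eq
  · exact eq_zero i hi

theorem inTR_iff {ξ : Vec n × Vec n} : inTR D x y ξ ↔
    ((∀ k, dot (grad (actFun D x k) x) ξ.1 = 0) ∧ ∀ i, x i = 0 → ξ.1 i = 0) ∧ ξ.2 = 0 := by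
  rw [forall_actFun D x (p := fun φ => dot (grad φ x) ξ.1 = 0)]
  refine ⟨fun hξ => ⟨⟨⟨hξ.1, hξ.2.1⟩, fun i hx => hξ.2.2.2.2.1 i ?_⟩, hnd.snd_eq_zero_of_inTR hξ⟩,
    fun ⟨⟨⟨h_eq, g_eq⟩, fst_eq⟩, snd_eq⟩ => ?_⟩
  · rwa [Finset.union_comm, hnd.1.mem_a01_union_a00]
  · refine ⟨h_eq, g_eq, fun i _ => by simp [snd_eq], fun _ => by simp [snd_eq], fun i hi => ?_,
      fun i _ => by simp [snd_eq]⟩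
    rw [Finset.union_comm, hnd.1.mem_a01_union_a00] at hi
    exact fst_eq i hi

/-- The local data of a nondegenerate T-stationary point. -/
def localData (hσ : ∀ i ∈ a01 x y, M.sig1 i ≠ 0) : LocalData n (P ⊕ {q // q ∈ Q0 D x}) where
  f := D.f
  ψ := actFun D x
  c := D.c
  x := x
  y := y
  σ := sigma x y M
  s := signOf x y M
  κ := actMult D x M.lam M.mu1
  μ := M.mu3
  u := 1 + D.ε
  tot := n - D.s
  kind := kindOf D x y M
  i₀ := hnd.exists_free.choose
  contDiff_f := D.hf
  contDiff_ψ := contDiff_actFun D x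
  stat := hnd.1.fst_eq
  ψ_eq := (forall_actFun D x (p := fun φ => φ x = 0)).2 ⟨hnd.1.1.1, fun _ => mem_Q0.1⟩
  sum_y := hnd.sum_eq
  u_pos := one_add_ε_pos D
  free_iff _ := kindOf_eq_free.trans
    ⟨fun hi => hnd.free_unique hi hnd.exists_free.choose_spec,
      fun hi => hi ▸ hnd.exists_free.choose_spec⟩
  sign _ := signOf_eq_one_or
  upper i hi :=
    have hy := kindOf_eq_upper.1 hi
    have hx := hnd.1.x_eq_zero (hy ▸ one_add_ε_pos D)
    ⟨hx, hy, hnd.sign_mul_sigma_pos hσ hx, hnd.lt_of_upper hy⟩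
  free i hi :=
    have hy := kindOf_eq_free.1 hi
    have hx := hnd.1.x_eq_zero hy.2
    ⟨hx, hy.2, lt_of_le_of_ne (hnd.1.1.2.2.2.2 i).2 hy.1, hnd.sign_mul_sigma_pos hσ hx,
      hnd.1.eq_of_free hy⟩
  zero _ hi :=
    have ⟨hx, hy, lt⟩ := hnd.1.of_kindOf_eq_zero hi
    ⟨hx, hy, sigma_eq_zero hx, lt⟩
  hyper _ hi :=
    have ⟨hx, hy, le⟩ := hnd.1.of_kindOf_eq_hyper hi
    ⟨signOf_mul_neg hx, hy, sigma_eq_zero hx, hnd.c_lt_of_y_eq_zero hy le⟩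
  biactive _ hi :=
    have h₀ := hnd.1.kindOf_eq_biactive.1 hi
    ⟨h₀.1, h₀.2, hnd.sign_mul_sigma_pos hσ h₀.1, hnd.lt_of_biactive h₀⟩
  licq := hnd.licq
  nondeg v hψ hx h := by
    refine congrArg Prod.fst
      (hnd.2.2.2.2.2.2 (v, 0) (hnd.inTR_iff.2 ⟨⟨hψ, hx⟩, rfl⟩) fun ζ hζ => ?_)
    rw [hess_LagR]
    exact h ζ.1 (hnd.inTR_iff.1 hζ).1.1 (hnd.inTR_iff.1 hζ).1.2

theorem TIndex_eq (hσ : ∀ i ∈ a01 x y, M.sig1 i ≠ 0) : TIndex D x y M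
    = negIndex (fun ξ ζ => (hnd.localData hσ).hess₀ ξ.1 ζ.1)
        (fun ξ => ξ.1 ∈ (hnd.localData hσ).tangent₀ ∧ ξ.2 = 0)
      + Fintype.card {i // (hnd.localData hσ).kind i = .biactive} := by
  have hess_eq : hess (LagR D x y M) (x, y) = fun ξ ζ => (hnd.localData hσ).hess₀ ξ.1 ζ.1 :=
    funext fun ξ => funext fun ζ => hess_LagR ξ ζ
  have tangent_eq : inTR D x y = fun ξ => ξ.1 ∈ (hnd.localData hσ).tangent₀ ∧ ξ.2 = 0 :=
    funext fun ξ => propext (hnd.inTR_iff.trans (and_congr_left fun _ =>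
      (hnd.localData hσ).mem_tangent₀.symm))
  rw [TIndex, hess_eq, tangent_eq]
  exact congrArg _ (Fintype.card_of_subtype (a00 x y) fun i =>
    mem_a00.trans hnd.1.kindOf_eq_biactive.symm).symm

end NondegTStatAt

end TStationary

/-! ### Karush–Kuhn–Tucker points of the regularization -/

/-- The multipliers of the regularization given by a solution of the stationarity system. Those of
inactive constraints are arbitrary; the division by `y i` is meaningful since `0 < y i` for the
indices at which `mu2`, `etaGe` and `etaLe` are used. -/
def regMult (D : Setting n P Q) {x : Vec n} (z : State n (P ⊕ {q // q ∈ Q0 D x})) :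
    SMult n P Q where
  lam p := z.κ (.inl p)
  mu1 := extMult D x z.κ
  mu2 i := z.μ - D.c i + z.x i * z.σ i / z.y i
  mu3 := z.μ
  etaGe i := z.σ i / z.y i
  etaLe i := -(z.σ i / z.y i)
  nu i := D.c i - z.μ

section Regularized

variable {D : Setting n P Q} {x y : Vec n} {M : TMult n P Q} {hnd : NondegTStatAt D x y M}
  {hσ : ∀ i ∈ a01 x y, M.sig1 i ≠ 0} {w : State n (P ⊕ {q // q ∈ Q0 D x}) × ℝ} {i : Fin n}

theorem NondegTStatAt.eta_localData : (hnd.localData hσ).eta w i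
    = if kindOf D x y M i = .zero then 0 else w.1.σ i / w.1.y i :=
  rfl

namespace LocalData.IsRegular

variable (hw : (hnd.localData hσ).IsRegular w)
include hw

theorem mul_eq_localData (hi : kindOf D x y M i ≠ .zero) :
    w.1.x i * w.1.y i = -(signOf x y M i * w.2 ^ 4) :=
  hw.mul_eq hi

theorem mem_Eact_iff : i ∈ Eact D w.1.y ↔ kindOf D x y M i = .upper := by
  rw [mem_Eact]
  exact ⟨fun h => by_contra fun hi => (hw.y_lt i hi).ne h, fun hi => hw.y_eq_of_upper hi⟩

theorem mem_Nact_iff : i ∈ Nact w.1.y ↔ kindOf D x y M i = .zero := by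
  rw [Nact, Finset.mem_filter, and_iff_right (Finset.mem_univ i)]
  exact ⟨fun h => by_contra fun hi => (hw.y_pos hi).ne' h, fun hi => hw.y_eq_of_zero hi⟩

theorem mem_Hge_iff : i ∈ Hge (w.2 ^ 4) w.1.x w.1.y ↔
    kindOf D x y M i ≠ .zero ∧ signOf x y M i = 1 := by
  have t_pos : 0 < w.2 ^ 4 := pow_pos hw.pos 4
  rw [Hge, Finset.mem_filter, and_iff_right (Finset.mem_univ i)]
  by_cases hi : kindOf D x y M i = .zero
  · simp [hi, hw.y_eq_of_zero hi, hw.pos.ne']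
  · rw [hw.mul_eq_localData hi, neg_inj, mul_eq_right₀ t_pos.ne', and_iff_right hi]

theorem mem_Hle_iff : i ∈ Hle (w.2 ^ 4) w.1.x w.1.y ↔
    kindOf D x y M i ≠ .zero ∧ signOf x y M i = -1 := by
  have t_pos : 0 < w.2 ^ 4 := pow_pos hw.pos 4
  rw [Hle, Finset.mem_filter, and_iff_right (Finset.mem_univ i)]
  by_cases hi : kindOf D x y M i = .zero
  · simp [hi, hw.y_eq_of_zero hi, t_pos.ne]
  · rw [hw.mul_eq_localData hi, ← neg_mul, mul_eq_right₀ t_pos.ne', and_iff_right hi,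
      neg_eq_iff_eq_neg]

theorem mem_Hact_iff : i ∈ Hact (w.2 ^ 4) w.1.x w.1.y ↔ kindOf D x y M i ≠ .zero := by
  rw [Hact, Finset.mem_union, hw.mem_Hge_iff, hw.mem_Hle_iff, ← and_or_left]
  exact and_iff_left signOf_eq_one_or

theorem etaGe_sub_etaLe (i : Fin n) :
    (if i ∈ Hge (w.2 ^ 4) w.1.x w.1.y then (regMult D w.1).etaGe i else 0)
      - (if i ∈ Hle (w.2 ^ 4) w.1.x w.1.y then (regMult D w.1).etaLe i else 0)
      = (hnd.localData hσ).eta w i := by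
  simp only [hw.mem_Hge_iff, hw.mem_Hle_iff, regMult, NondegTStatAt.eta_localData]
  by_cases hi : kindOf D x y M i = .zero
  · simp [hi]
  · rcases signOf_eq_one_or (x := x) (y := y) (M := M) (i := i) with h | h <;> norm_num [hi, h]

theorem eta_mul_y (i : Fin n) : (hnd.localData hσ).eta w i * w.1.y i = w.1.σ i := by
  rw [NondegTStatAt.eta_localData]
  split_ifs with hi
  · rw [zero_mul, hw.σ_eq_of_zero hi]
  · exact div_mul_cancel₀ _ (hw.y_pos hi).ne'

theorem c_eq (i : Fin n) : D.c i
    = -(if i ∈ Eact D w.1.y then (regMult D w.1).mu2 i else 0) + w.1.μ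
      + (hnd.localData hσ).eta w i * w.1.x i
      + if i ∈ Nact w.1.y then (regMult D w.1).nu i else 0 := by
  simp only [hw.mem_Eact_iff, hw.mem_Nact_iff, regMult, NondegTStatAt.eta_localData]
  by_cases zero : kindOf D x y M i = .zero
  · simp [zero]
  have y_ne := (hw.y_pos zero).ne'
  by_cases upper : kindOf D x y M i = .upper
  · simp only [upper, if_true, reduceCtorEq, if_false]
    ring
  · have mult_eq : w.1.σ i * w.1.x i = (D.c i - w.1.μ) * w.1.y i := hw.mult_eq zero upper
    simp only [zero, upper, if_false]
    field_simp
    linear_combination -mult_eq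

theorem mu2_pos (hi : i ∈ Eact D w.1.y) : 0 < (regMult D w.1).mu2 i := by
  have upper_neg : D.c i - w.1.μ - w.1.x i * w.1.σ i / w.1.y i < 0 :=
    hw.upper_neg i (hw.mem_Eact_iff.1 hi)
  simp only [regMult]
  linarith

theorem etaGe_pos (hi : i ∈ Hge (w.2 ^ 4) w.1.x w.1.y) : 0 < (regMult D w.1).etaGe i := by
  obtain ⟨hi, sign_eq⟩ := hw.mem_Hge_iff.1 hi
  have sign_σ : 0 < signOf x y M i * w.1.σ i := hw.sign_σ hi
  rw [sign_eq, one_mul] at sign_σ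
  exact div_pos sign_σ (hw.y_pos hi)

theorem etaLe_pos (hi : i ∈ Hle (w.2 ^ 4) w.1.x w.1.y) : 0 < (regMult D w.1).etaLe i := by
  obtain ⟨hi, sign_eq⟩ := hw.mem_Hle_iff.1 hi
  have sign_σ : 0 < signOf x y M i * w.1.σ i := hw.sign_σ hi
  rw [sign_eq, neg_one_mul, neg_pos] at sign_σ
  exact neg_pos.2 (div_neg_of_neg_of_pos sign_σ (hw.y_pos hi))

theorem nu_pos (hi : i ∈ Nact w.1.y) : 0 < (regMult D w.1).nu i :=
  sub_pos.2 (hw.μ_lt i (hw.mem_Nact_iff.1 hi))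

variable (hg : ∀ q ∉ Q0 D x, 0 < D.g q w.1.x)
include hg

theorem Q0_eq : Q0 D w.1.x = Q0 D x := by
  ext q
  rw [mem_Q0]
  exact ⟨fun h => by_contra fun hq => (hg q hq).ne' h, fun hq => hw.ψ_eq (.inr ⟨q, hq⟩)⟩

theorem feasS : feasS D (w.2 ^ 4) w.1.x w.1.y := by
  have t_pos : 0 < w.2 ^ 4 := pow_pos hw.pos 4
  refine ⟨fun p => hw.ψ_eq (.inl p), fun q => ?_, hw.sum_y.ge, fun i => ?_, fun i => ⟨?_, ?_⟩⟩
  · by_cases hq : q ∈ Q0 D x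
    · exact (hw.ψ_eq (.inr ⟨q, hq⟩)).ge
    · exact (hg q hq).le
  · by_cases hi : kindOf D x y M i = .zero
    · simp [hw.y_eq_of_zero hi, t_pos.le]
    · rw [hw.mul_eq_localData hi]
      rcases signOf_eq_one_or (x := x) (y := y) (M := M) (i := i) with h | h <;> rw [h] <;>
        constructor <;> linarith
  · by_cases hi : kindOf D x y M i = .zero
    · exact (hw.y_eq_of_zero hi).ge
    · exact (hw.y_pos hi).le
  · by_cases hi : kindOf D x y M i = .upper
    · exact (hw.y_eq_of_upper hi).le
    · exact (hw.y_lt i hi).le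

theorem kktEq : KKTEq D (w.2 ^ 4) w.1.x w.1.y (regMult D w.1) := by
  rw [KKTEq, hw.Q0_eq hg, sum_smul_ey, sum_smul_ey, sum_smul_hvec, sum_smul_hvec,
    sum_smul_pair_zero, sum_smul_pair_zero]
  refine Prod.ext (funext fun i => ?_) (funext fun i => ?_)
  · have stat : grad D.f w.1.x i - ∑ k, w.1.κ k * grad (actFun D x k) w.1.x i - w.1.σ i = 0 :=
      hw.stat i
    rw [← actMult_extMult D x w.1.κ, sum_actMult D x _ _ fun φ => grad φ w.1.x i, ← hw.eta_mul_y,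
      ← hw.etaGe_sub_etaLe, sub_mul] at stat
    simp only [eAll, Prod.fst_add, Prod.fst_sub, Prod.smul_fst, Pi.add_apply, Pi.sub_apply,
      Pi.zero_apply, smul_zero, sub_zero, add_zero]
    simp only [regMult] at stat ⊢
    linarith
  · have c_eq := hw.c_eq i
    rw [← hw.etaGe_sub_etaLe, sub_mul] at c_eq
    simp only [eAll, Prod.snd_add, Prod.snd_sub, Prod.smul_snd, Pi.add_apply, Pi.sub_apply,
      Pi.neg_apply, Pi.smul_apply, smul_eq_mul, mul_one, add_zero, zero_sub]
    simp only [regMult] at c_eq ⊢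
    linarith

theorem licq_of_Licq (independent : (hnd.localData hσ).Licq w) :
    LICQ D (w.2 ^ 4) w.1.x w.1.y := by
  intro lam mu1 mu2 mu3 eta nu _ relation
  rw [hw.Q0_eq hg, sum_smul_ey, sum_smul_ey, sum_smul_hvec,
    sum_smul_pair_zero, sum_smul_pair_zero] at relation
  have fst (i : Fin n) := congrFun (congrArg Prod.fst relation) i
  have snd (i : Fin n) := congrFun (congrArg Prod.snd relation) i
  simp only [eAll, Prod.fst_add, Prod.smul_fst, Pi.add_apply, Prod.snd_add, Prod.smul_snd,
    Prod.fst_zero, Prod.snd_zero, Pi.zero_apply, Pi.smul_apply, smul_eq_mul, mul_one, smul_zero,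
    add_zero, zero_add, hw.mem_Eact_iff, hw.mem_Nact_iff, hw.mem_Hact_iff] at fst snd
  obtain ⟨smooth, bounds, cardinality, products⟩ := independent (actMult D x lam mu1)
    (fun i => (if kindOf D x y M i = .upper then mu2 i else 0)
      + if kindOf D x y M i = .zero then nu i else 0) mu3
    (fun i => if kindOf D x y M i ≠ .zero then eta i else 0)
    (fun i h₁ h₂ => (congrArg₂ _ (if_neg h₁) (if_neg h₂)).trans (add_zero 0))
    (fun i hi => if_neg (not_not.2 hi))
    (fun i => (congrArg (· + _) (sum_actMult D x lam mu1 fun φ => grad φ w.1.x i)).trans (fst i))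
    (fun i => by linarith [snd i])
  refine ⟨fun p => congrFun smooth (.inl p), fun q hq => ?_, fun i hi => ?_, cardinality,
    fun i hi => ?_, fun i hi => ?_⟩
  · exact congrFun smooth (.inr ⟨q, hw.Q0_eq hg ▸ hq⟩)
  · simpa [hw.mem_Eact_iff.1 hi] using congrFun bounds i
  · simpa [hw.mem_Hact_iff.1 hi] using congrFun products i
  · simpa [hw.mem_Nact_iff.1 hi] using congrFun bounds i

theorem inTS_iff {ξ : Vec n × Vec n} :
    inTS D (w.2 ^ 4) w.1.x w.1.y ξ ↔ (hnd.localData hσ).tangent w ξ := by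
  simp only [inTS, hw.Q0_eq hg, hw.mem_Eact_iff, hw.mem_Nact_iff, hw.mem_Hact_iff]
  constructor
  · rintro ⟨h_eq, g_eq, upper, sum_eq, products, zero⟩
    exact ⟨(forall_actFun D x (p := fun φ => dot (grad φ w.1.x) ξ.1 = 0)).2 ⟨h_eq, g_eq⟩,
      fun i hi => hi.elim (upper i) (zero i), sum_eq hw.sum_y, products⟩
  · rintro ⟨smooth, bounds, sum_eq, products⟩
    exact ⟨fun p => smooth (.inl p), fun q hq => smooth (.inr ⟨q, hq⟩),
      fun i hi => bounds i (.inl hi), fun _ => sum_eq, products, fun i hi => bounds i (.inr hi)⟩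

theorem LagS_eq (z : Vec n × Vec n) : LagS D (w.2 ^ 4) w.1.x w.1.y (regMult D w.1) z
    = (D.f z.1 - ∑ k, w.1.κ k * actFun D x k z.1)
      + (w.1.μ * (n - D.s) - ∑ i ∈ Eact D w.1.y, (regMult D w.1).mu2 i * (1 + D.ε)
          - ∑ i ∈ Hge (w.2 ^ 4) w.1.x w.1.y, (regMult D w.1).etaGe i * w.2 ^ 4
          - ∑ i ∈ Hle (w.2 ^ 4) w.1.x w.1.y, (regMult D w.1).etaLe i * w.2 ^ 4
        + dot 0 z.1
        + dot (D.c + (fun i => if i ∈ Eact D w.1.y then (regMult D w.1).mu2 i else 0)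
          - (fun _ => w.1.μ) - fun i => if i ∈ Nact w.1.y then (regMult D w.1).nu i else 0) z.2)
      - ∑ i, (hnd.localData hσ).eta w i * (z.1 i * z.2 i) := by
  have products : ∑ i, (hnd.localData hσ).eta w i * (z.1 i * z.2 i)
      = ∑ i ∈ Hge (w.2 ^ 4) w.1.x w.1.y, (regMult D w.1).etaGe i * (z.1 i * z.2 i)
        - ∑ i ∈ Hle (w.2 ^ 4) w.1.x w.1.y, (regMult D w.1).etaLe i * (z.1 i * z.2 i) := by
    simp only [← hw.etaGe_sub_etaLe, sub_mul, ite_mul, zero_mul, Finset.sum_sub_distrib,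
      Finset.sum_ite_mem, Finset.univ_inter]
  have smooth : ∑ k, w.1.κ k * actFun D x k z.1
      = ∑ p, w.1.κ (.inl p) * D.h p z.1 + ∑ q ∈ Q0 D x, extMult D x w.1.κ q * D.g q z.1 := by
    rw [← sum_actMult D x _ _ fun φ => φ z.1, actMult_extMult]
  rw [products, smooth, dot_zero_left]
  simp only [LagS, hw.Q0_eq hg, mul_add, mul_sub, Finset.sum_sub_distrib,
    Finset.sum_add_distrib, dot_add_left, dot_sub_left, dot_const_left, ← sum_mul_eq_dot_ite]
  simp only [regMult]
  ring

theorem hess_LagS (ξ ζ : Vec n × Vec n) :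
    hess (LagS D (w.2 ^ 4) w.1.x w.1.y (regMult D w.1)) (w.1.x, w.1.y) ξ ζ
      = (hnd.localData hσ).hessReg w ξ ζ := by
  rw [hess_of_model (contDiff_lag D.hf (contDiff_actFun D x) w.1.κ) _ _ _ _ (hw.LagS_eq hg),
    sndDeriv_lag D.hf (contDiff_actFun D x), lagForm_symm D.hf (contDiff_actFun D x),
    LocalData.hessReg_apply]
  rfl

theorem kktAt (κ_pos : ∀ q, 0 < w.1.κ (.inr q)) (μ_pos : 0 < w.1.μ) :
    KKTAt D (w.2 ^ 4) w.1.x w.1.y (regMult D w.1) := by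
  refine ⟨hw.feasS hg, fun q _ => ?_, fun i hi => (hw.mu2_pos hi).le, μ_pos.le, ?_,
    fun i hi => (hw.etaGe_pos hi).le, fun i hi => (hw.etaLe_pos hi).le,
    fun i hi => (hw.nu_pos hi).le, hw.kktEq hg⟩
  · by_cases hq : q ∈ Q0 D x <;> simp [regMult, extMult, hq, (κ_pos _).le]
  · exact mul_eq_zero_of_right _ (sub_eq_zero.2 hw.sum_y)

theorem qIdx_eq : QIdx D (w.2 ^ 4) w.1.x w.1.y (regMult D w.1)
    = negIndex (fun ξ ζ => (hnd.localData hσ).hessReg w ξ ζ) ((hnd.localData hσ).tangent w) := by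
  have hess_eq : hess (LagS D (w.2 ^ 4) w.1.x w.1.y (regMult D w.1)) (w.1.x, w.1.y)
      = fun ξ ζ => (hnd.localData hσ).hessReg w ξ ζ :=
    funext fun ξ => funext fun ζ => hw.hess_LagS hg ξ ζ
  have tangent_eq : inTS D (w.2 ^ 4) w.1.x w.1.y = (hnd.localData hσ).tangent w :=
    funext fun ξ => propext (hw.inTS_iff hg)
  rw [QIdx, hess_eq, tangent_eq]

end LocalData.IsRegular

theorem LocalData.IsNondegenerate.nondegKKTAt (nondeg : (hnd.localData hσ).IsNondegenerate w)
    (hg : ∀ q ∉ Q0 D x, 0 < D.g q w.1.x)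
    (κ_pos : ∀ q, 0 < w.1.κ (.inr q)) (μ_pos : 0 < w.1.μ) :
    NondegKKTAt D (w.2 ^ 4) w.1.x w.1.y (regMult D w.1) := by
  have hw := nondeg.toIsRegular
  refine ⟨hw.kktAt hg κ_pos μ_pos, hw.licq_of_Licq hg nondeg.licq, fun q hq => ?_,
    fun i => hw.mu2_pos, fun i => hw.etaGe_pos, fun i => hw.etaLe_pos, fun i => hw.nu_pos,
    fun _ => μ_pos, fun ξ hξ hζ => ?_⟩
  · rw [hw.Q0_eq hg] at hq
    simpa only [regMult, extMult, dif_pos hq] using κ_pos ⟨q, hq⟩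
  · refine nondeg.hess_nondeg ξ ((hw.inTS_iff hg).1 hξ) fun ζ h => ?_
    rw [← hw.hess_LagS hg]
    exact hζ ζ ((hw.inTS_iff hg).2 h)
theorem NondegTStatAt.eventually_g_pos : ∀ᶠ w in (hnd.localData hσ).near,
    ∀ q ∉ Q0 D x, 0 < D.g q w.1.x :=
  (hnd.localData hσ).eventually_near_lt fun q hq =>
    ⟨by fun_prop, ((D.hg q).continuous.comp (by fun_prop)).continuousAt,
      lt_of_le_of_ne (hnd.1.1.2.1 q) (Ne.symm (mt mem_Q0.2 hq))⟩

theorem NondegTStatAt.eventually_κ_pos : ∀ᶠ w in (hnd.localData hσ).near,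
    ∀ q, 0 < w.1.κ (.inr q) :=
  eventually_all.2 fun q => ((hnd.localData hσ).tendsto_near (p := fun w => w.1.κ (.inr q))
    (by fun_prop)).eventually_const_lt (hnd.2.2.1 q q.2)

theorem NondegTStatAt.eventually_μ_pos : ∀ᶠ w in (hnd.localData hσ).near, 0 < w.1.μ :=
  ((hnd.localData hσ).tendsto_near (p := fun w => w.1.μ)
    (by fun_prop)).eventually_const_lt hnd.mu3_pos

variable (hnd hσ) in
theorem NondegTStatAt.eventually_nondegKKTAt : ∀ᶠ w in (hnd.localData hσ).near,
    NondegKKTAt D (w.2 ^ 4) w.1.x w.1.y (regMult D w.1) ∧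
      QIdx D (w.2 ^ 4) w.1.x w.1.y (regMult D w.1) = TIndex D x y M := by
  filter_upwards [hnd.eventually_g_pos (hσ := hσ), hnd.eventually_κ_pos, hnd.eventually_μ_pos,
    (hnd.localData hσ).eventually_isNondegenerate] with w hg κ_pos μ_pos nondeg
  refine ⟨nondeg.nondegKKTAt hg κ_pos μ_pos, ?_⟩
  rw [nondeg.toIsRegular.qIdx_eq hg, nondeg.negIndex_eq, hnd.TIndex_eq hσ]

end Regularized

theorem eventually_nhdsGT_zero_of_pow {p : ℝ → Prop} {k : ℕ} (hk : k ≠ 0)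
    (h : ∀ᶠ θ in 𝓝[>] 0, p (θ ^ k)) : ∀ᶠ t in 𝓝[>] 0, p t := by
  have root : Tendsto (fun t : ℝ => t ^ (k : ℝ)⁻¹) (𝓝[>] 0) (𝓝[>] 0) := by
    refine tendsto_nhdsWithin_iff.2 ⟨?_, eventually_mem_nhdsWithin.mono fun t ht => ?_⟩
    · have k_inv_pos : 0 < (k : ℝ)⁻¹ := by positivity
      simpa [Real.zero_rpow k_inv_pos.ne'] using
        (Real.continuousAt_rpow_const 0 _ (.inr k_inv_pos.le)).tendsto.mono_left nhdsWithin_le_nhds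
    · exact Real.rpow_pos_of_pos ht _
  filter_upwards [root.eventually h, eventually_mem_nhdsWithin] with t ht t_pos
  rwa [Real.rpow_inv_natCast_pow (le_of_lt t_pos) hk] at ht

/-- Theorem 4: well-posedness of the Scholtes-type
regularization. Around a nondegenerate T-stationary point of R with T-index m
satisfying NDT6, S(t) possesses for all sufficiently small t > 0 a
nondegenerate KKT point with quadratic index m. -/
theorem statement16 {n : ℕ} {P Q : Type*} [Fintype P] [Fintype Q]
    (D : Setting n P Q) (xb yb : Vec n)
    (Mb : TMult n P Q) (hnd : NondegTStatAt D xb yb Mb)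
    (m : ℕ) (hTI : TIndex D xb yb Mb = m)
    (hndt6 : ∀ i ∈ a01 xb yb, Mb.sig1 i ≠ 0) :
    ∀ U ∈ nhds ((xb, yb) : Vec n × Vec n), ∃ tbar > (0 : ℝ),
      ∀ t : ℝ, 0 < t → t < tbar →
        ∃ x y : Vec n, ∃ M : SMult n P Q,
          ((x, y) : Vec n × Vec n) ∈ U ∧ NondegKKTAt D t x y M ∧
          QIdx D t x y M = m := by
  intro U hU
  have mem_U : ∀ᶠ w in (hnd.localData hndt6).near, (w.1.x, w.1.y) ∈ U :=
    (hnd.localData hndt6).tendsto_near (p := fun w => (w.1.x, w.1.y)) (by fun_prop) hU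
  have solvable := (hnd.localData hndt6).eventually_exists_solution
    (mem_U.and (hnd.eventually_nondegKKTAt hndt6))
  have kkt : ∀ᶠ t in 𝓝[>] (0 : ℝ), ∃ x y : Vec n, ∃ M : SMult n P Q,
      (x, y) ∈ U ∧ NondegKKTAt D t x y M ∧ QIdx D t x y M = m :=
    eventually_nhdsGT_zero_of_pow four_ne_zero <| solvable.mono fun _ ⟨z, hz, nondeg, index⟩ =>
      ⟨z.x, z.y, regMult D z, hz, nondeg, index.trans hTI⟩
  obtain ⟨tbar, tbar_pos, h⟩ := mem_nhdsGT_iff_exists_Ioo_subset.1 kkt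
  exact ⟨tbar, tbar_pos, fun t t_pos t_lt => h ⟨t_pos, t_lt⟩⟩

end Scholtes
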